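/- arXiv:2405.14914 — 3 statements merged into one kernel-verified Lean document; each statement's English description precedes it below -/
import Mathlib

section
/- Let K be an algebraically closed field of characteristic zero, Q a finite quiver and d ∈ ℕ^{Q₀} ∖ {0} such that (Q,d) has property (P). Then there exist matrices x_a ∈ M_{d_{t(a)} × d_{s(a)}}(K) and y_a ∈ M_{d_{s(a)} × d_{t(a)}}(K) (a ∈ Q₁) with Σ_{a : t(a)=i} x_a y_a − Σ_{a : s(a)=i} y_a x_a = 0 for every vertex i, such that the only families of subspaces (W_i ⊆ K^{d_i})_{i∈Q₀} satisfying x_a(W_{s(a)}) ⊆ W_{t(a)} and y_a(W_{t(a)}) ⊆ W_{s(a)} for all a ∈ Q₁ are W_i = 0 for all i and W_i = K^{d_i} for all i. (That is, there exists a simple module over the preprojective algebra Π_Q of dimension vector d.) -/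
/-- A finite quiver (equivalently, a finite multigraph with a chosen orientation of each
edge): finitely many vertices and arrows, with source and target maps. -/
structure FinQuiver where
  V : Type
  E : Type
  [fintypeV : Fintype V]
  [fintypeE : Fintype E]
  [decEqV : DecidableEq V]
  s : E → V
  t : E → V

attribute [instance] FinQuiver.fintypeV FinQuiver.fintypeE FinQuiver.decEqV

namespace FinQuiver

/-- The adjacency (simple) graph of the underlying multigraph: two vertices are adjacent
if some edge joins them.  Connectivity of the multigraph only depends on this graph. -/
def adjGraph (G : FinQuiver) : SimpleGraph G.V :=
  SimpleGraph.fromRel fun a b => ∃ e : G.E, G.s e = a ∧ G.t e = b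

/-- The number of connected components of the underlying multigraph. -/
noncomputable def c (G : FinQuiver) : ℕ :=
  Nat.card G.adjGraph.ConnectedComponent

/-- The Betti number `b(Q) = c(Q) - #Q₀ + #Q₁` of the underlying multigraph. -/
noncomputable def betti (G : FinQuiver) : ℤ :=
  (G.c : ℤ) - Fintype.card G.V + Fintype.card G.E

/-- The underlying multigraph is connected. -/
def Connected (G : FinQuiver) : Prop := G.adjGraph.Connected

/-- Deletion of the edge `e`. -/
noncomputable def deleteEdge (G : FinQuiver) (e : G.E) : FinQuiver :=
  letI : DecidableEq G.E := Classical.decEq _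
  { V := G.V, E := {e' : G.E // e' ≠ e}, s := fun e' => G.s e'.1, t := fun e' => G.t e'.1 }

/-- The underlying multigraph is 2-connected: it is connected and stays connected after
deleting any single edge. -/
def TwoConnected (G : FinQuiver) : Prop :=
  G.Connected ∧ ∀ e : G.E, (G.deleteEdge e).Connected

/-- Restriction `Q|_I` to a subset `I` of the vertices (full sub(multi)graph). -/
noncomputable def restrictV (G : FinQuiver) (I : Set G.V) : FinQuiver :=
  letI : DecidablePred (· ∈ I) := Classical.decPred _
  { V := ↥I
    E := {e : G.E // G.s e ∈ I ∧ G.t e ∈ I}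
    s := fun e => ⟨G.s e.1, e.2.1⟩
    t := fun e => ⟨G.t e.1, e.2.2⟩ }

/-- Restriction `Q|_J` to a subset `J` of the edges (keeping all vertices). -/
noncomputable def restrictE (G : FinQuiver) (J : Set G.E) : FinQuiver :=
  letI : DecidablePred (· ∈ J) := Classical.decPred _
  { V := G.V
    E := ↥J
    s := fun e => G.s e.1
    t := fun e => G.t e.1 }

end FinQuiver
/-- A locally free representation of rank `r` of the quiver `G` over `R`: a matrix
`x_a` of size `r_{t(a)} × r_{s(a)}` for every arrow `a`. -/
abbrev QRep (G : FinQuiver) (R : Type) [CommRing R] (r : G.V → ℕ) : Type :=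
  ∀ a : G.E, Matrix (Fin (r (G.t a))) (Fin (r (G.s a))) R

/-- The second component of a pair in the doubled quiver: a matrix `y_a` of size
`r_{s(a)} × r_{t(a)}` for every arrow `a`. -/
abbrev QCoRep (G : FinQuiver) (R : Type) [CommRing R] (r : G.V → ℕ) : Type :=
  ∀ a : G.E, Matrix (Fin (r (G.s a))) (Fin (r (G.t a))) R

/-- The moment map of the quiver `G`:
`μ(x,y)_i := Σ_{a : t(a)=i} x_a y_a − Σ_{a : s(a)=i} y_a x_a`. -/
noncomputable def momentMap (G : FinQuiver) {R : Type} [CommRing R] {r : G.V → ℕ}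
    (x : QRep G R r) (y : QCoRep G R r) (i : G.V) : Matrix (Fin (r i)) (Fin (r i)) R :=
  (∑ a : G.E, if h : G.t a = i then
      cast (congrArg (fun v => Matrix (Fin (r v)) (Fin (r v)) R) h) (x a * y a) else 0)
  - ∑ a : G.E, if h : G.s a = i then
      cast (congrArg (fun v => Matrix (Fin (r v)) (Fin (r v)) R) h) (y a * x a) else 0

/-- The Euler form `⟨r,r'⟩ := Σ_{i∈Q₀} r_i r'_i − Σ_{a∈Q₁} r_{s(a)} r'_{t(a)}` of `G`. -/
def eulerForm (G : FinQuiver) (r r' : G.V → ℕ) : ℤ :=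
  ∑ i : G.V, (r i : ℤ) * (r' i : ℤ) - ∑ a : G.E, (r (G.s a) : ℤ) * (r' (G.t a) : ℤ)

/-- The change-of-basis action of `GL_{α,r} = ∏_i GL_{r_i}(R)` on representations:
`(g·x)_a := g_{t(a)} x_a g_{s(a)}⁻¹`. -/
def glAct (G : FinQuiver) {R : Type} [CommRing R] {r : G.V → ℕ}
    (g : ∀ i : G.V, (Matrix (Fin (r i)) (Fin (r i)) R)ˣ) (x : QRep G R r) : QRep G R r :=
  fun a => (g (G.t a) : Matrix (Fin (r (G.t a))) (Fin (r (G.t a))) R) * x a *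
    (((g (G.s a))⁻¹ : (Matrix (Fin (r (G.s a))) (Fin (r (G.s a))) R)ˣ) :
      Matrix (Fin (r (G.s a))) (Fin (r (G.s a))) R)

/-- `A` is block-diagonal for the splittings `m = m' + (m − m')`, `n = n' + (n − n')`:
all entries `A k l` with `(k < m') ↮ (l < n')` vanish. -/
def IsBlockDiag {R : Type} [CommRing R] {m n : ℕ} (m' n' : ℕ)
    (A : Matrix (Fin m) (Fin n) R) : Prop :=
  ∀ (k : Fin m) (l : Fin n), ¬ ((k : ℕ) < m' ↔ (l : ℕ) < n') → A k l = 0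

/-- `r'` is the rank vector of a direct summand of the representation `x`: for some
complementary rank vector `r''` with `r' + r'' = r`, some change of basis `g` makes all
matrices of `x` block-diagonal with diagonal blocks of sizes prescribed by `r'`, `r''`.
(In particular `r' = 0` and `r' = r` always qualify.) -/
def IsSummandRank (G : FinQuiver) {R : Type} [CommRing R] {r : G.V → ℕ}
    (x : QRep G R r) (r' : G.V → ℕ) : Prop :=
  ∃ r'' : G.V → ℕ, (∀ i, r' i + r'' i = r i) ∧
    ∃ g : ∀ i : G.V, (Matrix (Fin (r i)) (Fin (r i)) R)ˣ,
      ∀ a : G.E, IsBlockDiag (r' (G.t a)) (r' (G.s a)) (glAct G g x a)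

/-- `x` is decomposable: it is a direct sum of two representations of nonzero ranks. -/
def Decomposable (G : FinQuiver) {R : Type} [CommRing R] {r : G.V → ℕ}
    (x : QRep G R r) : Prop :=
  ∃ r' r'' : G.V → ℕ, (∀ i, r' i + r'' i = r i) ∧ r' ≠ 0 ∧ r'' ≠ 0 ∧
    ∃ g : ∀ i : G.V, (Matrix (Fin (r i)) (Fin (r i)) R)ˣ,
      ∀ a : G.E, IsBlockDiag (r' (G.t a)) (r' (G.s a)) (glAct G g x a)
/-- `Q` is totally negative: every vertex carries at least two loops, and every pair of
distinct vertices is joined by at least one arrow. -/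
def TotallyNegative (G : FinQuiver) : Prop :=
  (∀ i : G.V, 2 ≤ (Finset.univ.filter fun a : G.E => G.s a = i ∧ G.t a = i).card) ∧
  (∀ i j : G.V, i ≠ j → ∃ a : G.E, (G.s a = i ∧ G.t a = j) ∨ (G.s a = j ∧ G.t a = i))

/-- `(Q,d)` has property (P): `Q` is totally negative, and it is not the case that the
support of `d` consists of exactly two vertices `i ≠ j` joined by exactly one arrow of
`Q` with `d_i = d_j = 1`. -/
def PropertyP (G : FinQuiver) (d : G.V → ℕ) : Prop :=
  TotallyNegative G ∧
  ¬ ∃ i j : G.V, i ≠ j ∧ {v : G.V | d v ≠ 0} = ({i, j} : Set G.V) ∧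
      (Finset.univ.filter fun a : G.E =>
        (G.s a = i ∧ G.t a = j) ∨ (G.s a = j ∧ G.t a = i)).card = 1 ∧
      d i = 1 ∧ d j = 1

open Matrix in
/-- A subspace stable under `diag(0, 1, …, n - 1)` and under the all-ones matrix is trivial. -/
theorem Submodule.eq_bot_or_eq_top_of_diagonal_of_ones {K : Type} [Field K] [CharZero K] {n : ℕ}
    (W : Submodule K (Fin n → K))
    (hA : ∀ v ∈ W, (Matrix.of fun p q : Fin n => if (p : ℕ) = q then ((p : ℕ) : K) else 0) *ᵥ v ∈ W)
    (hB : ∀ v ∈ W, (Matrix.of fun _ _ : Fin n => (1 : K)) *ᵥ v ∈ W) :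
    W = ⊥ ∨ W = ⊤ := by
  have hpoly : ∀ f : Polynomial K, ∀ v ∈ W, (fun p : Fin n => f.eval ((p : ℕ) : K) * v p) ∈ W := by
    intro f
    induction f using Polynomial.induction_on' with
    | add f g hf hg =>
      intro v hv
      convert W.add_mem (hf v hv) (hg v hv) using 1
      ext p
      simp [add_mul]
    | monomial m c =>
      induction m with
      | zero =>
        intro v hv
        convert W.smul_mem c hv using 1
        ext p
        simp
      | succ m ih =>
        intro v hv
        convert hA _ (ih v hv) using 1
        ext p
        simp [Matrix.mulVec, dotProduct, Fin.val_inj, pow_succ]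
        ring
  have hproj : ∀ k : Fin n, ∀ v ∈ W, Pi.single k (v k) ∈ W := by
    intro k v hv
    have hinj : Set.InjOn (fun p : Fin n => ((p : ℕ) : K)) (Finset.univ : Finset (Fin n)) := by
      intro p _ q _ h
      exact Fin.ext (Nat.cast_injective h)
    convert hpoly (Lagrange.basis Finset.univ (fun p : Fin n => ((p : ℕ) : K)) k) v hv using 1
    ext p
    by_cases hp : p = k
    · subst hp
      rw [Lagrange.eval_basis_self hinj (Finset.mem_univ p)]
      simp
    · rw [Lagrange.eval_basis_of_ne (v := fun p : Fin n => ((p : ℕ) : K)) (Ne.symm hp)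
        (Finset.mem_univ p)]
      simp [hp]
  refine or_iff_not_imp_left.2 fun hW => ?_
  obtain ⟨w, hw, hw0⟩ := W.ne_bot_iff.1 hW
  obtain ⟨k, hk⟩ := Function.ne_iff.1 hw0
  have hone : ∀ j : Fin n, Pi.single j (1 : K) ∈ W := by
    intro j
    have h := W.smul_mem (w k)⁻¹ (hproj j _ (hB _ (hproj k w hw)))
    convert h using 1
    ext p
    have : w k ≠ 0 := hk
    by_cases hp : p = j
    · subst hp
      simp [Matrix.mulVec, dotProduct, this]
    · simp [hp]
  rw [eq_top_iff]
  intro v _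
  rw [← Finset.univ_sum_single v]
  refine W.sum_mem fun j _ => ?_
  convert W.smul_mem (v j) (hone j) using 1
  rw [← Pi.single_smul, smul_eq_mul, mul_one]

namespace FinQuiver

variable (G : FinQuiver) (d : G.V → ℕ) {K : Type} [Field K]

/-- The representation whose matrices are the truncations of the infinite matrices `X a`. -/
def truncRep (X : G.E → ℕ → ℕ → K) : QRep G K d :=
  fun a => Matrix.of fun p q => X a p q

/-- The opposite representation whose matrices are the truncations of the infinite matrices
`Y a`. -/
def truncCoRep (Y : G.E → ℕ → ℕ → K) : QCoRep G K d :=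
  fun a => Matrix.of fun p q => Y a p q

theorem momentMap_trunc_apply (X Y : G.E → ℕ → ℕ → K) (i : G.V) (p q : Fin (d i)) :
    momentMap G (truncRep G d X) (truncCoRep G d Y) i p q =
      ∑ a : G.E, ((if G.t a = i then ∑ k : Fin (d (G.s a)), X a p k * Y a k q else 0) -
        if G.s a = i then ∑ k : Fin (d (G.t a)), Y a p k * X a k q else 0) := by
  have hcast : ∀ (u : G.V) (h : u = i) (g : ℕ → ℕ → K) (M : Matrix (Fin (d u)) (Fin (d u)) K),
      (∀ p q, M p q = g p q) →
      cast (congrArg (fun v => Matrix (Fin (d v)) (Fin (d v)) K) h) M p q = g p q := by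
    rintro u rfl g M hM
    exact hM p q
  rw [momentMap, Matrix.sub_apply, Matrix.sum_apply, Matrix.sum_apply, Finset.sum_sub_distrib]
  congr 1
  · refine Finset.sum_congr rfl fun a _ => ?_
    split_ifs with h
    · exact hcast _ h (fun p q => ∑ k : Fin (d (G.s a)), X a p k * Y a k q) _ fun _ _ => rfl
    · rfl
  · refine Finset.sum_congr rfl fun a _ => ?_
    split_ifs with h
    · exact hcast _ h (fun p q => ∑ k : Fin (d (G.t a)), Y a p k * X a k q) _ fun _ _ => rfl
    · rfl

/-- `i` is linked to `j` if some nonzero matrix of the doubled representation maps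
`K ^ d i` to `K ^ d j`. -/
def Link (X Y : G.E → ℕ → ℕ → K) (i j : G.V) : Prop :=
  ∃ a, ∃ p < d j, ∃ q < d i,
    (G.s a = i ∧ G.t a = j ∧ X a p q ≠ 0) ∨ (G.t a = i ∧ G.s a = j ∧ Y a p q ≠ 0)

variable {G d}

open Matrix in
theorem trunc_simple [CharZero K] {X Y : G.E → ℕ → ℕ → K} {l₁ l₂ : G.V → G.E}
    (hs₁ : ∀ i, G.s (l₁ i) = i) (ht₁ : ∀ i, G.t (l₁ i) = i)
    (hs₂ : ∀ i, G.s (l₂ i) = i) (ht₂ : ∀ i, G.t (l₂ i) = i)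
    (hX₁ : ∀ i p q, X (l₁ i) p q = if p = q then (p : K) else 0)
    (hX₂ : ∀ i p q, X (l₂ i) p q = 1)
    (hlink : ∀ i j, d i ≠ 0 → d j ≠ 0 → Relation.ReflTransGen (Link G d X Y) i j)
    (W : (i : G.V) → Submodule K (Fin (d i) → K))
    (hx : ∀ a : G.E, ∀ v ∈ W (G.s a), (truncRep G d X a).mulVec v ∈ W (G.t a))
    (hy : ∀ a : G.E, ∀ v ∈ W (G.t a), (truncCoRep G d Y a).mulVec v ∈ W (G.s a)) :
    (∀ i : G.V, W i = ⊥) ∨ (∀ i : G.V, W i = ⊤) := by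
  have hx' : ∀ a u w, G.s a = u → G.t a = w → ∀ v ∈ W u,
      (Matrix.of fun (p : Fin (d w)) (q : Fin (d u)) => X a p q) *ᵥ v ∈ W w := by
    rintro a _ _ rfl rfl
    exact hx a
  have hy' : ∀ a u w, G.t a = u → G.s a = w → ∀ v ∈ W u,
      (Matrix.of fun (p : Fin (d w)) (q : Fin (d u)) => Y a p q) *ᵥ v ∈ W w := by
    rintro a _ _ rfl rfl
    exact hy a
  have htriv : ∀ i, W i = ⊥ ∨ W i = ⊤ := by
    intro i
    apply Submodule.eq_bot_or_eq_top_of_diagonal_of_ones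
    · simpa only [hX₁] using hx' (l₁ i) i i (hs₁ i) (ht₁ i)
    · simpa only [hX₂] using hx' (l₂ i) i i (hs₂ i) (ht₂ i)
  have hne : ∀ (m n : ℕ) (M : ℕ → ℕ → K) (U : Submodule K (Fin m → K)), ∀ p < m, ∀ q < n,
      M p q ≠ 0 →
      (∀ v : Fin n → K, (Matrix.of fun (p : Fin m) (q : Fin n) => M p q) *ᵥ v ∈ U) → U ≠ ⊥ := by
    rintro m n M U p hp q hq hM hU rfl
    have h := congrFun ((Submodule.mem_bot K).1 (hU (Pi.single ⟨q, hq⟩ 1))) ⟨p, hp⟩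
    simp at h
    exact hM h
  have hstep : ∀ i j, Link G d X Y i j → W i = ⊤ → W j = ⊤ := by
    rintro i j ⟨a, p, hp, q, hq, ⟨hs, ht, h⟩ | ⟨ht, hs, h⟩⟩ hi
    · refine (htriv j).resolve_left (hne _ _ _ _ p hp q hq h fun v => hx' a i j hs ht v ?_)
      simp [hi]
    · refine (htriv j).resolve_left (hne _ _ _ _ p hp q hq h fun v => hy' a i j ht hs v ?_)
      simp [hi]
  have hzero : ∀ i, d i = 0 → ∀ U : Submodule K (Fin (d i) → K), W i = U := by
    intro i hi U
    have : IsEmpty (Fin (d i)) := by rw [hi]; infer_instance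
    exact Subsingleton.elim _ _
  by_cases hall : ∀ i, W i = ⊥
  · exact Or.inl hall
  · right
    push Not at hall
    obtain ⟨i, hi⟩ := hall
    intro j
    by_cases hj : d j = 0
    · exact hzero j hj _
    · have hi0 : d i ≠ 0 := fun h => hi (hzero i h _)
      have := hlink i j hi0 hj
      induction this with
      | refl => exact (htriv i).resolve_left hi
      | tail _ hbc ih =>
        refine hstep _ _ hbc (ih ?_)
        obtain ⟨_, _, _, _, hq, _⟩ := hbc
        omega

theorem TotallyNegative.exists_loops (h : TotallyNegative G) :
    ∃ l₁ l₂ : G.V → G.E, (∀ i, G.s (l₁ i) = i) ∧ (∀ i, G.t (l₁ i) = i) ∧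
      (∀ i, G.s (l₂ i) = i) ∧ (∀ i, G.t (l₂ i) = i) ∧ ∀ i, l₁ i ≠ l₂ i := by
  have h' : ∀ i, ∃ a b : G.E, (G.s a = i ∧ G.t a = i) ∧ (G.s b = i ∧ G.t b = i) ∧ a ≠ b := by
    intro i
    obtain ⟨a, ha, b, hb, hab⟩ := Finset.one_lt_card.1 (h.1 i)
    exact ⟨a, b, by simpa using ha, by simpa using hb, hab⟩
  choose l₁ l₂ h₁ h₂ h₁₂ using h'
  exact ⟨l₁, l₂, fun i => (h₁ i).1, fun i => (h₁ i).2, fun i => (h₂ i).1, fun i => (h₂ i).2, h₁₂⟩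

/-- There is a simple module over the preprojective algebra with dimension vector `d`. -/
def HasSimple (G : FinQuiver) (d : G.V → ℕ) (K : Type) [Field K] : Prop :=
  ∃ (x : QRep G K d) (y : QCoRep G K d),
    (∀ i : G.V, momentMap G x y i = 0) ∧
    ∀ W : (i : G.V) → Submodule K (Fin (d i) → K),
      (∀ a : G.E, ∀ v ∈ W (G.s a), (x a).mulVec v ∈ W (G.t a)) →
      (∀ a : G.E, ∀ v ∈ W (G.t a), (y a).mulVec v ∈ W (G.s a)) →
      (∀ i : G.V, W i = ⊥) ∨ (∀ i : G.V, W i = ⊤)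

/-- `j` is reached from `i` by an arrow of `F` or by the reverse of an arrow of `B`. -/
def Step (G : FinQuiver) (F B : Set G.E) (i j : G.V) : Prop :=
  (∃ a ∈ F, G.s a = i ∧ G.t a = j) ∨ ∃ a ∈ B, G.t a = i ∧ G.s a = j

/-- If disjoint sets of non-loop arrows, one used forwards and one backwards, connect the support
of `d` strongly, then all products `x_a y_a` and `y_a x_a` can be made to vanish. -/
theorem hasSimple_of_strongly_connected [CharZero K] (hG : TotallyNegative G) (F B : Set G.E)
    (hF : ∀ a ∈ F, G.s a ≠ G.t a) (hB : ∀ a ∈ B, G.s a ≠ G.t a) (hFB : Disjoint F B)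
    (hconn : ∀ i j, d i ≠ 0 → d j ≠ 0 →
      Relation.ReflTransGen (fun u w => d u ≠ 0 ∧ d w ≠ 0 ∧ Step G F B u w) i j) :
    HasSimple G d K := by
  classical
  obtain ⟨l₁, l₂, hs₁, ht₁, hs₂, ht₂, hl⟩ := TotallyNegative.exists_loops hG
  let X : G.E → ℕ → ℕ → K := fun e p q =>
    if e = l₁ (G.s e) then (if p = q then (p : K) else 0)
    else if e = l₂ (G.s e) then 1 else if e ∈ F then 1 else 0
  let Y : G.E → ℕ → ℕ → K := fun e _ _ => if e ∈ B then 1 else 0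
  have hne₁ : ∀ a, G.s a ≠ G.t a → a ≠ l₁ (G.s a) := fun a h ha => h (by rw [ha, hs₁, ht₁])
  have hne₂ : ∀ a, G.s a ≠ G.t a → a ≠ l₂ (G.s a) := fun a h ha => h (by rw [ha, hs₂, ht₂])
  have hXY : ∀ a p q p' q', X a p q * Y a p' q' = 0 := by
    intro a p q p' q'
    by_cases ha : a ∈ B
    · simp [X, hne₁ a (hB a ha), hne₂ a (hB a ha), Set.disjoint_right.1 hFB ha]
    · simp [Y, ha]
  refine ⟨truncRep G d X, truncCoRep G d Y, fun i => ?_,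
    trunc_simple hs₁ ht₁ hs₂ ht₂ ?_ ?_ fun i j hi hj => ?_⟩
  · ext p q
    rw [momentMap_trunc_apply]
    simp [hXY, mul_comm (Y _ _ _)]
  · intro i p q
    simp [X, hs₁]
  · intro i p q
    simp [X, hs₂, (hl i).symm]
  · refine Relation.ReflTransGen.mono ?_ i j (hconn i j hi hj)
    rintro u w ⟨hu, hw, ⟨a, ha, hs, ht⟩ | ⟨a, ha, ht, hs⟩⟩
    · refine ⟨a, 0, Nat.pos_of_ne_zero hw, 0, Nat.pos_of_ne_zero hu, Or.inl ⟨hs, ht, ?_⟩⟩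
      simp [X, hne₁ a (hF a ha), hne₂ a (hF a ha), ha]
    · refine ⟨a, 0, Nat.pos_of_ne_zero hw, 0, Nat.pos_of_ne_zero hu, Or.inr ⟨ht, hs, ?_⟩⟩
      simp [Y, ha]

theorem hasSimple_of_card_support_ne_two [CharZero K] (hG : TotallyNegative G)
    (hcard : (Finset.univ.filter fun i => d i ≠ 0).card ≠ 2) : HasSimple G d K := by
  obtain ⟨σ, hσ, -⟩ := (Finset.univ.filter fun i => d i ≠ 0).exists_cycleOn
  have hmem : ∀ {i}, d i ≠ 0 → i ∈ Finset.univ.filter fun i => d i ≠ 0 := by simp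
  have hσd : ∀ {i}, d i ≠ 0 → d (σ i) ≠ 0 := by
    intro i hi
    simpa using hσ.1.mapsTo (Finset.mem_coe.2 (hmem hi))
  refine hasSimple_of_strongly_connected hG
    {a | d (G.s a) ≠ 0 ∧ G.s a ≠ G.t a ∧ σ (G.s a) = G.t a}
    {a | d (G.s a) ≠ 0 ∧ G.s a ≠ G.t a ∧ σ (G.t a) = G.s a}
    (fun a ha => ha.2.1) (fun a ha => ha.2.1) ?_ fun i j hi hj => ?_
  · rw [Set.disjoint_left]
    rintro a ⟨h0, h1, h2⟩ ⟨-, -, h3⟩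
    have hsq : (σ ^ 2) (G.s a) = G.s a := by simp [pow_two, h2, h3]
    have hdvd := (hσ.pow_apply_eq (hmem h0)).1 hsq
    rcases (Nat.dvd_prime Nat.prime_two).1 hdvd with h | h
    · have hfix : (σ ^ 1) (G.s a) = G.s a := (hσ.pow_apply_eq (hmem h0)).2 (by rw [h])
      exact h1 (by rw [← h2]; simpa using hfix.symm)
    · exact hcard h
  · obtain ⟨n, -, rfl⟩ := hσ.exists_pow_eq (hmem hi) (hmem hj)
    clear hj
    induction n with
    | zero => exact .refl
    | succ n ih =>
      have hn : d ((σ ^ n) i) ≠ 0 := by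
        clear ih
        induction n with
        | zero => exact hi
        | succ n ih => rw [pow_succ']; exact hσd ih
      rw [pow_succ', Equiv.Perm.mul_apply]
      generalize (σ ^ n) i = u at ih hn
      by_cases hu : u = σ u
      · rwa [← hu]
      · refine ih.tail ⟨hn, hσd hn, ?_⟩
        obtain ⟨a, ⟨hs, ht⟩ | ⟨hs, ht⟩⟩ := hG.2 _ _ hu
        · exact .inl ⟨a, ⟨by rwa [hs], by rwa [hs, ht], by rw [hs, ht]⟩, hs, ht⟩
        · exact .inr ⟨a, ⟨by rw [hs]; exact hσd hn, by rw [hs, ht]; exact Ne.symm hu,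
            by rw [hs, ht]⟩, ht, hs⟩

theorem reflTransGen_of_support_pair {i j : G.V} {R : G.V → G.V → Prop}
    (hsupp : ∀ v, d v ≠ 0 → v = i ∨ v = j) (hij : R i j) (hji : R j i) (u w : G.V)
    (hu : d u ≠ 0) (hw : d w ≠ 0) : Relation.ReflTransGen R u w := by
  rcases hsupp u hu with rfl | rfl <;> rcases hsupp w hw with rfl | rfl
  exacts [.refl, .single hij, .single hji, .refl]

theorem hasSimple_of_two_arrows [CharZero K] (hG : TotallyNegative G) {i j : G.V}
    (hij : i ≠ j) (hi : d i ≠ 0) (hj : d j ≠ 0) (hsupp : ∀ v, d v ≠ 0 → v = i ∨ v = j)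
    {a b : G.E} (hab : a ≠ b)
    (ha : (G.s a = i ∧ G.t a = j) ∨ (G.s a = j ∧ G.t a = i))
    (hb : (G.s b = i ∧ G.t b = j) ∨ (G.s b = j ∧ G.t b = i)) : HasSimple G d K := by
  refine hasSimple_of_strongly_connected hG
    {e | (e = a ∧ G.s e = i) ∨ (e = b ∧ G.s e = j)}
    {e | (e = a ∧ G.s e = j) ∨ (e = b ∧ G.s e = i)} ?_ ?_ ?_
    (reflTransGen_of_support_pair hsupp ⟨hi, hj, ?_⟩ ⟨hj, hi, ?_⟩)
  · rintro e (⟨rfl, h⟩ | ⟨rfl, h⟩) <;> grind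
  · rintro e (⟨rfl, h⟩ | ⟨rfl, h⟩) <;> grind
  · rw [Set.disjoint_left]
    rintro e (⟨rfl, h⟩ | ⟨rfl, h⟩) (⟨hea, hs⟩ | ⟨heb, hs⟩) <;> grind
  · rcases ha with ⟨hs, ht⟩ | ⟨hs, ht⟩
    · exact .inl ⟨a, .inl ⟨rfl, hs⟩, hs, ht⟩
    · exact .inr ⟨a, .inl ⟨rfl, hs⟩, ht, hs⟩
  · rcases hb with ⟨hs, ht⟩ | ⟨hs, ht⟩
    · exact .inr ⟨b, .inr ⟨rfl, hs⟩, ht, hs⟩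
    · exact .inl ⟨b, .inr ⟨rfl, hs⟩, hs, ht⟩

/-- Entries of the infinite matrix unit with a single `1` at position `(m, n)`. -/
def matUnit (K : Type) [Field K] (m n p q : ℕ) : K := if p = m ∧ q = n then 1 else 0

theorem sum_matUnit_mul_matUnit {N : ℕ} (m n m' n' p q : ℕ) (hn : n < N) :
    ∑ k : Fin N, matUnit K m n p k * matUnit K m' n' k q =
      if n = m' then matUnit K m n' p q else 0 := by
  rw [Finset.sum_eq_single ⟨n, hn⟩]
  · simp only [matUnit]
    split_ifs <;> simp_all
  · intro k _ hk
    have : (k : ℕ) ≠ n := fun h => hk (Fin.ext h)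
    simp [matUnit, this]
  · simp

theorem hasSimple_of_two_le [CharZero K] (hG : TotallyNegative G) {i j : G.V}
    (hij : i ≠ j) (hi : 2 ≤ d i) (hj : d j ≠ 0) (hsupp : ∀ v, d v ≠ 0 → v = i ∨ v = j) :
    HasSimple G d K := by
  classical
  obtain ⟨l₁, l₂, hs₁, ht₁, hs₂, ht₂, hl⟩ := TotallyNegative.exists_loops hG
  obtain ⟨a, ha⟩ := hG.2 i j hij
  let X : G.E → ℕ → ℕ → K := fun e p q =>
    if e = l₁ (G.s e) then (if p = q then (p : K) else 0)
    else if e = l₂ (G.s e) then 1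
    else if e = a then (if G.s a = i then matUnit K 0 0 p q else - matUnit K 1 0 p q) else 0
  let Y : G.E → ℕ → ℕ → K := fun e p q =>
    if e = l₁ i then matUnit K 1 0 p q
    else if e = a then (if G.s a = i then matUnit K 1 0 p q else matUnit K 0 0 p q) else 0
  have hst : G.s a ≠ G.t a := by grind
  have hne₁ : ∀ v, a ≠ l₁ v := fun v h => hst (by rw [h, hs₁, ht₁])
  have hne₂ : ∀ v, a ≠ l₂ v := fun v h => hst (by rw [h, hs₂, ht₂])
  have hXa : ∀ p q, X a p q = if G.s a = i then matUnit K 0 0 p q else - matUnit K 1 0 p q := by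
    intro p q
    simp [X, hne₁, hne₂]
  have hYa : ∀ p q, Y a p q = if G.s a = i then matUnit K 1 0 p q else matUnit K 0 0 p q := by
    intro p q
    simp [Y, hne₁]
  have hX₁ : ∀ v p q, X (l₁ v) p q = if p = q then (p : K) else 0 := by
    intro v p q
    simp [X, hs₁]
  refine ⟨truncRep G d X, truncCoRep G d Y, fun v => ?_,
    trunc_simple hs₁ ht₁ hs₂ ht₂ hX₁ ?_ (reflTransGen_of_support_pair hsupp ?_ ?_)⟩
  · ext p q
    rw [momentMap_trunc_apply, Matrix.zero_apply]
    let c : K := if i = v then matUnit K 1 0 p q else 0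
    have hterm : ∀ e : G.E,
        ((if G.t e = v then ∑ k : Fin (d (G.s e)), X e p k * Y e k q else 0) -
          if G.s e = v then ∑ k : Fin (d (G.t e)), Y e p k * X e k q else 0) =
        (if e = l₁ i then c else 0) - if e = a then c else 0 := by
      intro e
      by_cases he₁ : e = l₁ i
      · subst he₁
        have hY : ∀ p q, Y (l₁ i) p q = matUnit K 1 0 p q := by simp [Y]
        have h1 : ∑ k : Fin (d (G.s (l₁ i))), X (l₁ i) p k * Y (l₁ i) k q =
            matUnit K 1 0 p q := by
          rw [Finset.sum_eq_single ⟨1, by rw [hs₁]; omega⟩]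
          · by_cases hp : (p : ℕ) = 1 <;> simp [hX₁, hY, hp, matUnit]
          · intro k _ hk
            have : (k : ℕ) ≠ 1 := fun h => hk (Fin.ext h)
            simp [hY, matUnit, this]
          · simp
        have h2 : ∑ k : Fin (d (G.t (l₁ i))), Y (l₁ i) p k * X (l₁ i) k q = 0 := by
          refine Finset.sum_eq_zero fun k _ => ?_
          by_cases hk : (k : ℕ) = 0 <;> simp [hX₁, hY, hk, matUnit]
        rw [h1, h2, hs₁, ht₁, if_pos rfl, if_neg (hne₁ i).symm]
        simp [c]
      · by_cases he : e = a
        · subst he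
          simp only [hXa, hYa, if_neg he₁]
          rcases ha with ⟨hs, ht⟩ | ⟨hs, ht⟩
          · have h1 := sum_matUnit_mul_matUnit (K := K) (N := d (G.s e)) 0 0 1 0 p q
              (by rw [hs]; omega)
            have h2 := sum_matUnit_mul_matUnit (K := K) (N := d (G.t e)) 1 0 0 0 p q
              (by rw [ht]; omega)
            simp only [hs, if_true, h1, h2]
            simp [c]
          · have h1 := sum_matUnit_mul_matUnit (K := K) (N := d (G.s e)) 1 0 0 0 p q
              (by rw [hs]; omega)
            have h2 := sum_matUnit_mul_matUnit (K := K) (N := d (G.t e)) 0 0 1 0 p q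
              (by rw [ht]; omega)
            have hsi : G.s e ≠ i := by rw [hs]; exact hij.symm
            simp only [if_neg hsi, neg_mul, mul_neg, Finset.sum_neg_distrib, h1, h2]
            by_cases hv : i = v <;> simp [c, ht, hv]
        · simp [Y, he, he₁]
    rw [Finset.sum_congr rfl fun e _ => hterm e]
    simp
  · intro v p q
    simp [X, hs₂, (hl v).symm]
  · rcases ha with ⟨hs, ht⟩ | ⟨hs, ht⟩
    · exact ⟨a, 0, by omega, 0, by omega, .inl ⟨hs, ht, by simp [hXa, hs, matUnit]⟩⟩
    · exact ⟨a, 0, by omega, 0, by omega, .inr ⟨ht, hs, by simp [hYa, hs, hij.symm, matUnit]⟩⟩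
  · rcases ha with ⟨hs, ht⟩ | ⟨hs, ht⟩
    · exact ⟨a, 1, by omega, 0, by omega, .inr ⟨ht, hs, by simp [hYa, hs, matUnit]⟩⟩
    · exact ⟨a, 1, by omega, 0, by omega, .inl ⟨hs, ht, by simp [hXa, hs, hij.symm, matUnit]⟩⟩

end FinQuiver

/-- Let `K` be an algebraically closed field of characteristic zero,
`Q` a finite quiver and `d ∈ ℕ^{Q₀} ∖ {0}` such that `(Q,d)` has property (P).  Then
there exist matrices `x_a ∈ M_{d_{t(a)} × d_{s(a)}}(K)` and
`y_a ∈ M_{d_{s(a)} × d_{t(a)}}(K)` with `μ(x,y) = 0`, such that the only families of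
subspaces `(W_i ⊆ K^{d_i})` invariant under all `x_a` and `y_a` are the zero family and
the full family.  (There exists a simple `Π_Q`-module of dimension vector `d`.) -/
theorem exists_simple_preprojective_module (K : Type) [Field K] [IsAlgClosed K]
    [CharZero K] (G : FinQuiver) (d : G.V → ℕ) (hd : d ≠ 0) (hP : PropertyP G d) :
    ∃ (x : QRep G K d) (y : QCoRep G K d),
      (∀ i : G.V, momentMap G x y i = 0) ∧
      ∀ W : (i : G.V) → Submodule K (Fin (d i) → K),
        (∀ a : G.E, ∀ v ∈ W (G.s a), (x a).mulVec v ∈ W (G.t a)) →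
        (∀ a : G.E, ∀ v ∈ W (G.t a), (y a).mulVec v ∈ W (G.s a)) →
        (∀ i : G.V, W i = ⊥) ∨ (∀ i : G.V, W i = ⊤) := by
  by_cases hcard : (Finset.univ.filter fun i => d i ≠ 0).card = 2
  · obtain ⟨i, j, hij, hS⟩ := Finset.card_eq_two.1 hcard
    have hmem : ∀ v, d v ≠ 0 ↔ v = i ∨ v = j := by
      intro v
      simpa using Finset.ext_iff.1 hS v
    have hi : d i ≠ 0 := (hmem i).2 (.inl rfl)
    have hj : d j ≠ 0 := (hmem j).2 (.inr rfl)
    by_cases hi2 : 2 ≤ d i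
    · exact FinQuiver.hasSimple_of_two_le hP.1 hij hi2 hj fun v => (hmem v).1
    by_cases hj2 : 2 ≤ d j
    · exact FinQuiver.hasSimple_of_two_le hP.1 hij.symm hj2 hi fun v hv => ((hmem v).1 hv).symm
    have hlt : 1 < (Finset.univ.filter fun a : G.E =>
        (G.s a = i ∧ G.t a = j) ∨ (G.s a = j ∧ G.t a = i)).card := by
      refine lt_of_le_of_ne ?_ fun h => hP.2 ⟨i, j, hij, ?_, h.symm, by omega, by omega⟩
      · obtain ⟨a, ha⟩ := hP.1.2 i j hij
        exact Finset.card_pos.2 ⟨a, by simpa using ha⟩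
      · ext v
        simpa using hmem v
    obtain ⟨a, ha, b, hb, hab⟩ := Finset.one_lt_card.1 hlt
    exact FinQuiver.hasSimple_of_two_arrows hP.1 hij hi hj (fun v => (hmem v).1) hab
      (by simpa using ha) (by simpa using hb)
  · exact FinQuiver.hasSimple_of_card_support_ne_two hP.1 hcard
end

section
/- Let Q be a finite quiver, α ≥ 1, 𝔽_q a finite field, and R := 𝔽_q[t]/(t^α). Then #{ (x,y) ∈ R^{Q₁} × R^{Q₁} : for every i ∈ Q₀, Σ_{a : t(a)=i} x_a y_a = Σ_{a : s(a)=i} x_a y_a } = q^{α·#Q₁} · Σ over all partitions 𝒫 of Q₀ into nonempty parts of (1 − q^{−1})^{#Q₀ − #𝒫} · ∏_{I ∈ 𝒫} A_{(Q|_I,α),1̲}(q). (This is the rank-1̲ instance of the plethystic formula relating counts of jets on quiver moment-map fibres to Kac polynomials with multiplicities.) -/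
/-- The ring of truncated polynomials `F[t]/(t^α)`. -/
abbrev TruncRing (F : Type) [CommRing F] (α : ℕ) : Type :=
  Polynomial F ⧸ Ideal.span {(Polynomial.X : Polynomial F) ^ α}

/-- The image of `t` in `F[t]/(t^α)`. -/
noncomputable def tvar (F : Type) [CommRing F] (α : ℕ) : TruncRing F α :=
  Ideal.Quotient.mk _ (Polynomial.X : Polynomial F)
/-- The gauge relation on rank-`1̲` representations of the quiver `G` over the commutative
ring `R`: `x` and `y` are related iff they differ by the change-of-basis action of
`(Rˣ)^{Q₀}`, `(u·x)_a := u_{t(a)} x_a u_{s(a)}⁻¹`. -/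
def GaugeRel (G : FinQuiver) (R : Type) [CommRing R] (x y : G.E → R) : Prop :=
  ∃ u : G.V → Rˣ, ∀ a : G.E, y a = (u (G.t a) : R) * x a * ((u (G.s a))⁻¹ : Rˣ)

/-- `A_{(Q,α),1̲}(q)`: the number of orbits of tuples `x ∈ R^{Q₁}` whose support multigraph
(vertex set `Q₀`, edge set `{a | x_a ≠ 0}`) is connected, under the action of `(Rˣ)^{Q₀}`;
that is, the number of isomorphism classes of indecomposable locally free rank-`1̲`
representations of `Q` over `R`. -/
noncomputable def KacCount (G : FinQuiver) (R : Type) [CommRing R] : ℕ :=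
  Nat.card (Quot (fun x y : {x : G.E → R // (G.restrictE {a | x a ≠ 0}).Connected} =>
    GaugeRel G R x.1 y.1))

/-- `B_{(Q,α)}(q)`: the number of pairs `(x,y) ∈ R^{Q₁} × R^{Q₁}` satisfying the rank-`1̲`
moment map equations `∑_{a : t(a)=i} x_a y_a = ∑_{a : s(a)=i} x_a y_a` for every vertex `i`. -/
noncomputable def BCount (G : FinQuiver) (R : Type) [CommRing R] : ℕ :=
  Nat.card {xy : (G.E → R) × (G.E → R) //
    ∀ i : G.V, (∑ a : G.E, if G.t a = i then xy.1 a * xy.2 a else 0)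
             = ∑ a : G.E, if G.s a = i then xy.1 a * xy.2 a else 0}


/-! ### Character sums over a finite ring -/

open Classical in
/-- Orthogonality relation for a primitive additive character, in several variables. -/
theorem AddChar.sum_pi_mulShift {R ι : Type*} [CommRing R] [Fintype R] [Fintype ι]
    [DecidableEq ι] {ψ : AddChar R ℂ} (hψ : ψ.IsPrimitive) (b : ι → R) :
    ∑ y : ι → R, ψ (∑ i, y i * b i)
      = if ∀ i, b i = 0 then (Fintype.card R : ℂ) ^ Fintype.card ι else 0 := by
  have h1 : ∀ y : ι → R, ψ (∑ i, y i * b i) = ∏ i, ψ (y i * b i) := fun y => by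
    exact map_prod ψ.toMonoidHom (fun i => Multiplicative.ofAdd (y i * b i)) Finset.univ
  simp_rw [h1]
  rw [← Fintype.prod_sum (fun i r => ψ (r * b i))]
  simp_rw [AddChar.sum_mulShift _ hψ]
  split_ifs with h
  · simp [h]
  · push Not at h
    obtain ⟨i, hi⟩ := h
    exact Finset.prod_eq_zero (Finset.mem_univ i) (by simp [hi])

namespace FinQuiver

/-- The number of pairs `(x, u)` where `x` is a rank-`1̲` representation and `u` is an
endomorphism of `x`. -/
noncomputable def endPairCount (G : FinQuiver) (R : Type) [CommRing R] : ℕ :=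
  Nat.card {p : (G.E → R) × (G.V → R) // ∀ a, p.1 a * (p.2 (G.t a) - p.2 (G.s a)) = 0}

/-- The pairs `(x, u)` where `x` is a rank-`1̲` representation with connected support and `u` is
an endomorphism of `x`. -/
abbrev ConnEndPair (G : FinQuiver) (R : Type) [CommRing R] : Type :=
  {p : (G.E → R) × (G.V → R) // (G.restrictE {a | p.1 a ≠ 0}).Connected ∧
    ∀ a, p.1 a * (p.2 (G.t a) - p.2 (G.s a)) = 0}

theorem moment_pairing (G : FinQuiver) {R : Type} [CommRing R] (x y : G.E → R) (u : G.V → R) :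
    ∑ i, u i * ((∑ a, if G.t a = i then x a * y a else 0) -
      ∑ a, if G.s a = i then x a * y a else 0)
      = ∑ a, y a * (x a * (u (G.t a) - u (G.s a))) := by
  simp_rw [mul_sub, Finset.sum_sub_distrib, Finset.mul_sum]
  congr 1 <;> rw [Finset.sum_comm] <;> refine Finset.sum_congr rfl fun a _ => ?_ <;>
    simp <;> ring

open Classical in
/-- The kernel of the moment map and of its transpose have proportional sizes. -/
theorem card_pow_mul_BCount (G : FinQuiver) {R : Type} [CommRing R] [Fintype R]
    {ψ : AddChar R ℂ} (hψ : ψ.IsPrimitive) :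
    (Fintype.card R) ^ Fintype.card G.V * BCount G R
      = (Fintype.card R) ^ Fintype.card G.E * G.endPairCount R := by
  have h : ∀ x : G.E → R,
      ∑ y : G.E → R, (if ∀ i, (∑ a, if G.t a = i then x a * y a else 0) -
        (∑ a, if G.s a = i then x a * y a else 0) = 0 then
          (Fintype.card R : ℂ) ^ Fintype.card G.V else 0)
      = ∑ u : G.V → R, (if ∀ a, x a * (u (G.t a) - u (G.s a)) = 0 then
          (Fintype.card R : ℂ) ^ Fintype.card G.E else 0) := by
    intro x
    simp_rw [← AddChar.sum_pi_mulShift hψ]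
    rw [Finset.sum_comm]
    simp_rw [moment_pairing]
  have h2 := Finset.sum_congr (rfl : (Finset.univ : Finset (G.E → R)) = _) fun x _ => h x
  rw [← Fintype.sum_prod_type', ← Fintype.sum_prod_type', ← Finset.sum_filter,
    ← Finset.sum_filter, Finset.sum_const, Finset.sum_const] at h2
  rw [BCount, endPairCount, Nat.card_eq_fintype_card, Nat.card_eq_fintype_card,
    Fintype.card_subtype, Fintype.card_subtype]
  simp_rw [sub_eq_zero (a := Finset.sum _ _)] at h2
  rw [nsmul_eq_mul, nsmul_eq_mul, mul_comm, mul_comm (Nat.cast _)] at h2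
  exact_mod_cast h2

/-! ### Decomposition along the connected components of the support -/

theorem restrictE_adjGraph_adj (G : FinQuiver) (J : Set G.E) (v w : G.V) :
    (G.restrictE J).adjGraph.Adj v w ↔ v ≠ w ∧
      ((∃ e ∈ J, G.s e = v ∧ G.t e = w) ∨ ∃ e ∈ J, G.s e = w ∧ G.t e = v) := by
  refine (SimpleGraph.fromRel_adj _ _ _).trans (and_congr_right fun _ => or_congr ?_ ?_) <;>
  · constructor
    · rintro ⟨e, h⟩
      exact ⟨e.1, e.2, h⟩
    · rintro ⟨e, he, h⟩
      exact ⟨⟨e, he⟩, h⟩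

/-- The simple graph underlying the support multigraph of `x`. -/
noncomputable def supportGraph (G : FinQuiver) {R : Type} [CommRing R] (x : G.E → R) : SimpleGraph G.V :=
  (G.restrictE {a | x a ≠ 0}).adjGraph

theorem supportGraph_adj (G : FinQuiver) {R : Type} [CommRing R] (x : G.E → R) (v w : G.V) :
    (G.supportGraph x).Adj v w ↔ v ≠ w ∧
      ((∃ e, x e ≠ 0 ∧ G.s e = v ∧ G.t e = w) ∨ ∃ e, x e ≠ 0 ∧ G.s e = w ∧ G.t e = v) :=
  G.restrictE_adjGraph_adj _ v w

/-- The support graph of the restriction of `x` to `I` is induced by that of `x`. -/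
theorem restrictV_connected_iff (G : FinQuiver) {R : Type} [CommRing R] (x : G.E → R)
    (I : Set G.V) :
    ((G.restrictV I).restrictE {a | x a.1 ≠ 0}).Connected ↔
      ((G.supportGraph x).induce I).Connected := by
  have : (G.restrictV I).supportGraph (fun a => x a.1) = (G.supportGraph x).induce I := by
    ext v w
    refine ((G.restrictV I).supportGraph_adj _ v w).trans
      (Iff.trans ?_ (G.supportGraph_adj _ v.1 w.1).symm)
    refine and_congr (not_congr Subtype.ext_iff) (or_congr ?_ ?_)
    · constructor
      · rintro ⟨e, he, h1, h2⟩
        exact ⟨e.1, he, congrArg Subtype.val h1, congrArg Subtype.val h2⟩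
      · rintro ⟨e, he, h1, h2⟩
        exact ⟨⟨e, h1 ▸ v.2, h2 ▸ w.2⟩, he, Subtype.ext h1, Subtype.ext h2⟩
    · constructor
      · rintro ⟨e, he, h1, h2⟩
        exact ⟨e.1, he, congrArg Subtype.val h1, congrArg Subtype.val h2⟩
      · rintro ⟨e, he, h1, h2⟩
        exact ⟨⟨e, h1 ▸ w.2, h2 ▸ v.2⟩, he, Subtype.ext h1, Subtype.ext h2⟩
  exact iff_of_eq (congrArg SimpleGraph.Connected this)

/-- `P` is a partition of the vertices into nonempty parts. -/
abbrev IsPartition (G : FinQuiver) (P : Finset (Finset G.V)) : Prop :=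
  (∀ I ∈ P, I.Nonempty) ∧ (↑P : Set (Finset G.V)).PairwiseDisjoint id ∧
    P.biUnion id = Finset.univ

/-- The support of `x` decomposes along `P`, with connected pieces. -/
abbrev SupportSplits (G : FinQuiver) {R : Type} [CommRing R] (P : Finset (Finset G.V))
    (x : G.E → R) : Prop :=
  (∀ a, x a ≠ 0 → ∃ I ∈ P, G.s a ∈ I ∧ G.t a ∈ I) ∧
    ∀ I ∈ P, ((G.restrictV (↑I : Set G.V)).restrictE {a | x a.1 ≠ 0}).Connected

theorem IsPartition.exists_mem {G : FinQuiver} {P : Finset (Finset G.V)} (hP : G.IsPartition P)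
    (i : G.V) : ∃ I ∈ P, i ∈ I := by
  have : i ∈ P.biUnion id := hP.2.2 ▸ Finset.mem_univ i
  simpa using this

theorem IsPartition.eq_of_mem {G : FinQuiver} {P : Finset (Finset G.V)} (hP : G.IsPartition P)
    {I J : Finset G.V} (hI : I ∈ P) (hJ : J ∈ P) {i : G.V} (hi : i ∈ I) (hj : i ∈ J) : I = J := by
  by_contra hne
  exact Finset.disjoint_left.1 (hP.2.1 hI hJ hne) hi hj

open Classical in
/-- The vertex sets of the connected components of the support of `x`. -/
noncomputable def supportParts (G : FinQuiver) {R : Type} [CommRing R] (x : G.E → R) :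
    Finset (Finset G.V) :=
  Finset.univ.image fun i : G.V =>
    Finset.univ.filter fun j : G.V => (G.supportGraph x).Reachable i j

theorem isPartition_supportParts (G : FinQuiver) {R : Type} [CommRing R] (x : G.E → R) :
    G.IsPartition (G.supportParts x) := by
  classical
  refine ⟨?_, ?_, ?_⟩
  · intro I hI
    obtain ⟨i, -, rfl⟩ := Finset.mem_image.1 hI
    exact ⟨i, by simp⟩
  · intro I hI J hJ hne
    obtain ⟨i, -, rfl⟩ := Finset.mem_image.1 hI
    obtain ⟨j, -, rfl⟩ := Finset.mem_image.1 hJ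
    refine Finset.disjoint_left.2 fun k hk hk' => hne ?_
    simp only [id, Finset.mem_filter, Finset.mem_univ, true_and] at hk hk'
    ext l
    simp only [Finset.mem_filter, Finset.mem_univ, true_and]
    exact ⟨fun h => hk'.trans (hk.symm.trans h), fun h => hk.trans (hk'.symm.trans h)⟩
  · refine Finset.eq_univ_of_forall fun i => Finset.mem_biUnion.2
      ⟨_, Finset.mem_image_of_mem _ (Finset.mem_univ i), by simp⟩

theorem reachable_of_support (G : FinQuiver) {R : Type} [CommRing R] {x : G.E → R} {a : G.E}
    (ha : x a ≠ 0) : (G.supportGraph x).Reachable (G.s a) (G.t a) := by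
  by_cases h : G.s a = G.t a
  · exact h ▸ SimpleGraph.Reachable.refl _
  · exact SimpleGraph.Adj.reachable ((G.supportGraph_adj _ _ _).2
      ⟨h, Or.inl ⟨a, ha, rfl, rfl⟩⟩)

theorem supportSplits_supportParts (G : FinQuiver) {R : Type} [CommRing R] (x : G.E → R) :
    G.SupportSplits (G.supportParts x) x := by
  classical
  refine ⟨fun a ha => ⟨_, Finset.mem_image_of_mem _ (Finset.mem_univ (G.s a)), ?_⟩, ?_⟩
  · simpa using G.reachable_of_support ha
  · intro I hI
    obtain ⟨i, -, rfl⟩ := Finset.mem_image.1 hI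
    refine (G.restrictV_connected_iff x _).2 ?_
    have hsupp : (↑(Finset.univ.filter fun j : G.V => (G.supportGraph x).Reachable i j) :
        Set G.V) = ((G.supportGraph x).connectedComponentMk i).supp := by
      ext j
      rw [SimpleGraph.ConnectedComponent.mem_supp_iff, SimpleGraph.ConnectedComponent.eq,
        SimpleGraph.reachable_comm]
      simp
    rw [hsupp]
    exact SimpleGraph.ConnectedComponent.connected_toSimpleGraph _

theorem eq_supportParts (G : FinQuiver) {R : Type} [CommRing R] {x : G.E → R}
    {P : Finset (Finset G.V)} (hP : G.IsPartition P) (hx : G.SupportSplits P x) :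
    P = G.supportParts x := by
  classical
  have key : ∀ I ∈ P, ∀ i ∈ I, I = Finset.univ.filter fun j : G.V =>
      (G.supportGraph x).Reachable i j := by
    intro I hI i hi
    ext j
    simp only [Finset.mem_filter, Finset.mem_univ, true_and]
    constructor
    · intro hj
      have := (G.restrictV_connected_iff x _).1 (hx.2 I hI)
      exact (this.preconnected ⟨i, hi⟩ ⟨j, hj⟩).map (SimpleGraph.Embedding.induce _).toHom
    · rintro ⟨w⟩
      induction w with
      | nil => exact hi
      | cons h _ ih =>
        refine ih ?_
        obtain ⟨-, ⟨e, he, rfl, rfl⟩ | ⟨e, he, rfl, rfl⟩⟩ := (G.supportGraph_adj _ _ _).1 h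
        · obtain ⟨J, hJ, hs, ht⟩ := hx.1 e he
          exact hP.eq_of_mem hJ hI hs hi ▸ ht
        · obtain ⟨J, hJ, hs, ht⟩ := hx.1 e he
          exact hP.eq_of_mem hJ hI ht hi ▸ hs
  ext I
  simp only [supportParts, Finset.mem_image, Finset.mem_univ, true_and]
  constructor
  · intro hI
    obtain ⟨i, hi⟩ := hP.1 I hI
    exact ⟨i, (key I hI i hi).symm⟩
  · rintro ⟨i, rfl⟩
    obtain ⟨I, hI, hi⟩ := hP.exists_mem i
    rw [← key I hI i hi]
    exact hI

/-- Restriction of an endomorphism pair to the parts of a partition along which the support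
splits. -/
def restrictPair (G : FinQuiver) (R : Type) [CommRing R] (P : Finset (Finset G.V))
    (p : {p : (G.E → R) × (G.V → R) // G.SupportSplits P p.1 ∧
      ∀ a, p.1 a * (p.2 (G.t a) - p.2 (G.s a)) = 0}) (I : P) :
    ConnEndPair (G.restrictV (↑I.1 : Set G.V)) R :=
  ⟨(fun a => p.1.1 a.1, fun i => p.1.2 i.1), p.2.1.2 I.1 I.2, fun a => p.2.2 a.1⟩

theorem restrictPair_bijective (G : FinQuiver) (R : Type) [CommRing R]
    {P : Finset (Finset G.V)} (hP : G.IsPartition P) :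
    Function.Bijective (G.restrictPair R P) := by
  classical
  constructor
  · intro p p' h
    have h1 : ∀ (I : P) (a : (G.restrictV (↑I.1 : Set G.V)).E), p.1.1 a.1 = p'.1.1 a.1 :=
      fun I a => congrFun (congrArg (fun z => z.1.1) (congrFun h I)) a
    have h2 : ∀ (I : P) (a : (G.restrictV (↑I.1 : Set G.V)).V), p.1.2 a.1 = p'.1.2 a.1 :=
      fun I a => congrFun (congrArg (fun z => z.1.2) (congrFun h I)) a
    refine Subtype.ext (Prod.ext (funext fun a => ?_) (funext fun i => ?_))
    · by_cases hp : ∃ I ∈ P, G.s a ∈ I ∧ G.t a ∈ I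
      · obtain ⟨I, hI, ha⟩ := hp
        exact h1 ⟨I, hI⟩ ⟨a, ha⟩
      · rw [not_not.1 (mt (p.2.1.1 a) hp), not_not.1 (mt (p'.2.1.1 a) hp)]
    · obtain ⟨I, hI, hi⟩ := hP.exists_mem i
      exact h2 ⟨I, hI⟩ ⟨i, hi⟩
  · intro f
    choose part hpart hmem using hP.exists_mem
    let x : G.E → R := fun a => if h : G.t a ∈ part (G.s a) then
      (f ⟨part (G.s a), hpart _⟩).1.1 ⟨a, hmem _, h⟩ else 0
    let u : G.V → R := fun i => (f ⟨part i, hpart i⟩).1.2 ⟨i, hmem i⟩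
    have hx : ∀ (I : P) (a : (G.restrictV (↑I.1 : Set G.V)).E), x a.1 = (f I).1.1 a := by
      rintro ⟨I, hI⟩ ⟨a, hs, ht⟩
      obtain rfl := hP.eq_of_mem (hpart _) hI (hmem _) hs
      exact dif_pos ht
    have hu : ∀ (I : P) (i : (G.restrictV (↑I.1 : Set G.V)).V), u i.1 = (f I).1.2 i := by
      rintro ⟨I, hI⟩ ⟨i, hi⟩
      obtain rfl := hP.eq_of_mem (hpart _) hI (hmem _) hi
      rfl
    have hx0 : ∀ a, x a ≠ 0 → ∃ I ∈ P, G.s a ∈ I ∧ G.t a ∈ I := by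
      intro a ha
      by_cases h : G.t a ∈ part (G.s a)
      · exact ⟨_, hpart _, hmem _, h⟩
      · exact absurd (dif_neg h) ha
    refine ⟨⟨(x, u), ⟨hx0, fun I hI => ?_⟩, fun a => ?_⟩, ?_⟩
    · have := (f ⟨I, hI⟩).2.1
      rw [← funext (hx ⟨I, hI⟩)] at this
      exact this
    · by_cases ha : x a = 0
      · simp [ha]
      · obtain ⟨I, hI, hs, ht⟩ := hx0 a ha
        have h := (f ⟨I, hI⟩).2.2 ⟨a, hs, ht⟩
        exact (congrArg₂ (· * ·) (hx ⟨I, hI⟩ ⟨a, hs, ht⟩) (congrArg₂ (· - ·)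
          (hu ⟨I, hI⟩ ⟨G.t a, ht⟩) (hu ⟨I, hI⟩ ⟨G.s a, hs⟩))).trans h
    · funext I
      exact Subtype.ext (Prod.ext (funext (hx I)) (funext (hu I)))

open Classical in
/-- Exponential formula: endomorphism pairs are counted by summing over set partitions. -/
theorem endPairCount_eq_sum (G : FinQuiver) (R : Type) [CommRing R] [Finite R] :
    G.endPairCount R = ∑ P ∈ Finset.univ.filter G.IsPartition,
      ∏ I ∈ P, Nat.card (ConnEndPair (G.restrictV (↑I : Set G.V)) R) := by
  have := Fintype.ofFinite R
  have h : ∀ P ∈ Finset.univ.filter G.IsPartition,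
      ∏ I ∈ P, Nat.card (ConnEndPair (G.restrictV (↑I : Set G.V)) R) =
      ((Finset.univ.filter fun p : (G.E → R) × (G.V → R) =>
        ∀ a, p.1 a * (p.2 (G.t a) - p.2 (G.s a)) = 0).filter
          fun p => G.supportParts p.1 = P).card := by
    intro P hP
    have hP := (Finset.mem_filter.1 hP).2
    rw [← Finset.prod_coe_sort, ← Nat.card_pi,
      ← Nat.card_congr (Equiv.ofBijective _ (G.restrictPair_bijective R hP)),
      Nat.card_eq_fintype_card, Fintype.card_subtype, Finset.filter_filter]
    congr 1
    ext p
    simp only [Finset.mem_filter, Finset.mem_univ, true_and]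
    rw [and_comm]
    refine and_congr_right fun _ => ⟨fun h => (G.eq_supportParts hP h).symm, ?_⟩
    rintro rfl
    exact G.supportSplits_supportParts _
  rw [Finset.sum_congr rfl h, ← Finset.card_eq_sum_card_fiberwise, endPairCount,
    Nat.card_eq_fintype_card, Fintype.card_subtype]
  intro p _
  exact Finset.mem_coe.2 (Finset.mem_filter.2 ⟨Finset.mem_univ _, G.isPartition_supportParts _⟩)

end FinQuiver

/-! ### Units, stabilisers and orbits -/

namespace FinQuiver

/-- The endomorphism ring of a rank-`1̲` representation, as an additive group. -/
def endGroup (G : FinQuiver) {R : Type} [CommRing R] (x : G.E → R) : AddSubgroup (G.V → R) where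
  carrier := {u | ∀ a, x a * (u (G.t a) - u (G.s a)) = 0}
  zero_mem' := by simp
  add_mem' {u v} hu hv a := by
    have h1 := hu a
    have h2 := hv a
    simp only [Pi.add_apply]
    linear_combination h1 + h2
  neg_mem' {u} hu a := by
    have h1 := hu a
    simp only [Pi.neg_apply]
    linear_combination -h1

end FinQuiver

/-- A surjective homomorphism onto a finite group of order `q` is nonzero on a proportion
`1 - 1/q` of its source. -/
theorem AddMonoidHom.card_mul_card_ne_zero {A B : Type*} [AddGroup A] [AddGroup B] [Finite A]
    [Finite B] (f : A →+ B) (hf : Function.Surjective f) :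
    Nat.card B * Nat.card {a : A // f a ≠ 0} = (Nat.card B - 1) * Nat.card A := by
  classical
  have h1 : Nat.card A = Nat.card B * Nat.card f.ker := by
    rw [f.ker.card_eq_card_quotient_mul_card_addSubgroup,
      Nat.card_congr (QuotientAddGroup.quotientKerEquivOfSurjective f hf).toEquiv]
  have h2 : Nat.card A = Nat.card f.ker + Nat.card {a : A // f a ≠ 0} := by
    rw [← Nat.card_sum]
    exact Nat.card_congr (Equiv.sumCompl fun a : A => f a = 0).symm
  have h3 : 0 < Nat.card B := Nat.card_pos
  obtain ⟨n, hn⟩ : ∃ n, Nat.card B = n + 1 := ⟨Nat.card B - 1, by omega⟩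
  rw [hn] at h1 ⊢
  have h4 : Nat.card {a : A // f a ≠ 0} = n * Nat.card f.ker := by
    rw [h1] at h2; linarith
  rw [h4, h1, Nat.add_sub_cancel]
  ring

/-- The count of units of a finite ring with a local surjection onto a field of order `q`. -/
theorem card_mul_card_units {R F : Type} [CommRing R] [Finite R] [Field F] [Finite F]
    (π : R →+* F) (hπ : Function.Surjective π) [IsLocalHom π] :
    Nat.card F * Nat.card Rˣ = (Nat.card F - 1) * Nat.card R := by
  rw [← π.toAddMonoidHom.card_mul_card_ne_zero hπ]
  congr 1
  refine Nat.card_congr (Equiv.ofBijective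
    (fun u => (⟨u, (u.isUnit.map π).ne_zero⟩ : {r : R // π.toAddMonoidHom r ≠ 0})) ⟨?_, ?_⟩)
  · exact fun u v h => Units.ext (congrArg Subtype.val h)
  · rintro ⟨r, hr⟩
    exact ⟨((isUnit_map_iff π r).1 (isUnit_iff_ne_zero.2 hr)).unit, rfl⟩

namespace FinQuiver

/-- The automorphisms of a rank-`1̲` representation with connected support form a proportion
`1 - 1/q` of its endomorphisms. -/
theorem card_mul_card_aut (G : FinQuiver) {R F : Type} [CommRing R] [Finite R] [Field F]
    [Finite F] (π : R →+* F) (hπ : Function.Surjective π) [IsLocalHom π] (x : G.E → R)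
    (hx : (G.restrictE {a | x a ≠ 0}).Connected) :
    Nat.card F * Nat.card {u : G.V → Rˣ // ∀ a, x a * ((u (G.t a) : R) - u (G.s a)) = 0}
      = (Nat.card F - 1) * Nat.card {u : G.V → R // ∀ a, x a * (u (G.t a) - u (G.s a)) = 0} := by
  classical
  obtain ⟨i⟩ := hx.nonempty
  change G.V at i
  have hconst : ∀ u ∈ G.endGroup x, ∀ j, π (u i) = π (u j) := by
    intro u hu j
    obtain ⟨w⟩ : (G.supportGraph x).Reachable i j := hx.preconnected i j
    have hedge : ∀ a, x a ≠ 0 → π (u (G.s a)) = π (u (G.t a)) := by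
      intro a ha
      by_contra hne
      have h1 : IsUnit (u (G.t a) - u (G.s a)) := by
        rw [← isUnit_map_iff π, map_sub]
        exact isUnit_iff_ne_zero.2 (sub_ne_zero.2 (Ne.symm hne))
      exact ha (h1.mul_left_eq_zero.1 (hu a))
    induction w with
    | nil => rfl
    | cons h _ ih =>
      refine Eq.trans ?_ ih
      obtain ⟨-, ⟨e, he, rfl, rfl⟩ | ⟨e, he, rfl, rfl⟩⟩ := (G.supportGraph_adj _ _ _).1 h
      · exact hedge e he
      · exact (hedge e he).symm
  let f : G.endGroup x →+ F :=
    (π.toAddMonoidHom.comp (Pi.evalAddMonoidHom (fun _ => R) i)).comp (G.endGroup x).subtype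
  have hf : Function.Surjective f := by
    intro c
    obtain ⟨r, rfl⟩ := hπ c
    exact ⟨⟨fun _ => r, fun a => by simp⟩, rfl⟩
  refine Eq.trans ?_ (f.card_mul_card_ne_zero hf)
  congr 1
  refine Nat.card_congr (Equiv.ofBijective
    (fun u => (⟨⟨fun j => (u.1 j : R), u.2⟩, ((u.1 i).isUnit.map π).ne_zero⟩ :
      {a : G.endGroup x // f a ≠ 0})) ⟨?_, ?_⟩)
  · intro u v h
    have h' := congrArg (fun z => z.1.1) h
    exact Subtype.ext (funext fun j => Units.ext (congrFun h' j))
  · rintro ⟨⟨u, hu⟩, hne⟩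
    have hunit : ∀ j, IsUnit (u j) := fun j => by
      rw [← isUnit_map_iff π, ← hconst u hu j]
      exact isUnit_iff_ne_zero.2 hne
    exact ⟨⟨fun j => (hunit j).unit, hu⟩, rfl⟩

/-- The representations with connected support. -/
abbrev ConnRep (G : FinQuiver) (R : Type) [CommRing R] : Type :=
  {x : G.E → R // (G.restrictE {a | x a ≠ 0}).Connected}

/-- The change-of-basis action on representations with connected support. -/
noncomputable instance gaugeAction (G : FinQuiver) (R : Type) [CommRing R] :
    MulAction (G.V → Rˣ) (G.ConnRep R) where
  smul u x := ⟨fun a => u (G.t a) * x.1 a * ((u (G.s a))⁻¹ : Rˣ), by simpa using x.2⟩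
  one_smul x := Subtype.ext (funext fun a => by
    change ((1 : Rˣ) : R) * x.1 a * ((1⁻¹ : Rˣ) : R) = x.1 a
    simp)
  mul_smul u v x := Subtype.ext (funext fun a => by
    change ((u (G.t a) * v (G.t a) : Rˣ) : R) * x.1 a * (((u (G.s a) * v (G.s a))⁻¹ : Rˣ) : R) =
      u (G.t a) * (v (G.t a) * x.1 a * ((v (G.s a))⁻¹ : Rˣ)) * ((u (G.s a))⁻¹ : Rˣ)
    rw [mul_inv]
    push_cast
    ring)

theorem gauge_smul_eq_iff (G : FinQuiver) {R : Type} [CommRing R] (u : G.V → Rˣ)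
    (x y : G.ConnRep R) :
    u • x = y ↔ ∀ a, y.1 a = (u (G.t a) : R) * x.1 a * ((u (G.s a))⁻¹ : Rˣ) := by
  rw [Subtype.ext_iff, funext_iff]
  exact forall_congr' fun a => eq_comm

theorem gauge_smul_eq_self_iff (G : FinQuiver) {R : Type} [CommRing R] (u : G.V → Rˣ)
    (x : G.ConnRep R) :
    u • x = x ↔ ∀ a, x.1 a * ((u (G.t a) : R) - u (G.s a)) = 0 := by
  rw [gauge_smul_eq_iff]
  refine forall_congr' fun a => ?_
  rw [Units.eq_mul_inv_iff_mul_eq, mul_sub, sub_eq_zero, mul_comm (u (G.t a) : R), eq_comm]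

/-- Burnside's lemma for the change-of-basis action. -/
theorem KacCount_mul_card (G : FinQuiver) (R : Type) [CommRing R] [Finite R] :
    KacCount G R * Nat.card Rˣ ^ Fintype.card G.V
      = Nat.card (Σ x : G.ConnRep R,
          {u : G.V → Rˣ // ∀ a, x.1 a * ((u (G.t a) : R) - u (G.s a)) = 0}) := by
  classical
  have := Fintype.ofFinite R
  have h1 : KacCount G R = Nat.card (MulAction.orbitRel.Quotient (G.V → Rˣ) (G.ConnRep R)) := by
    refine Nat.card_congr (Quot.congr (Equiv.refl _) fun x y => ?_)
    change GaugeRel G R x.1 y.1 ↔ x ∈ MulAction.orbit (G.V → Rˣ) y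
    rw [MulAction.mem_orbit_symm, MulAction.mem_orbit_iff]
    exact exists_congr fun u => (G.gauge_smul_eq_iff u x y).symm
  have h2 : Nat.card Rˣ ^ Fintype.card G.V = Nat.card (G.V → Rˣ) := by
    simp [Nat.card_eq_fintype_card]
  rw [h1, h2, Nat.card_eq_fintype_card, Nat.card_eq_fintype_card, Nat.card_eq_fintype_card]
  refine (MulAction.sum_card_fixedBy_eq_card_orbits_mul_card_group _ _).symm.trans ?_
  rw [← Fintype.card_sigma]
  refine Fintype.card_congr
    { toFun := fun p => ⟨p.2.1, p.1, (G.gauge_smul_eq_self_iff _ _).1 p.2.2⟩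
      invFun := fun p => ⟨p.2.1, p.1, (G.gauge_smul_eq_self_iff _ _).2 p.2.2⟩
      left_inv := fun _ => rfl
      right_inv := fun _ => rfl }

/-- Comparison of the Kac count with the count of endomorphism pairs. -/
theorem card_mul_KacCount_mul_card (G : FinQuiver) {R F : Type} [CommRing R] [Finite R] [Field F]
    [Finite F] (π : R →+* F) (hπ : Function.Surjective π) [IsLocalHom π] :
    Nat.card F * (KacCount G R * Nat.card Rˣ ^ Fintype.card G.V)
      = (Nat.card F - 1) * Nat.card (G.ConnEndPair R) := by
  classical
  have := Fintype.ofFinite R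
  have h : Nat.card (G.ConnEndPair R) = Nat.card (Σ x : G.ConnRep R,
      {u : G.V → R // ∀ a, x.1 a * (u (G.t a) - u (G.s a)) = 0}) :=
    Nat.card_congr
      { toFun := fun p => ⟨⟨p.1.1, p.2.1⟩, p.1.2, p.2.2⟩
        invFun := fun p => ⟨(p.1.1, p.2.1), p.1.2, p.2.2⟩
        left_inv := fun _ => rfl
        right_inv := fun _ => rfl }
  rw [KacCount_mul_card, h, Nat.card_sigma, Nat.card_sigma, Finset.mul_sum, Finset.mul_sum]
  exact Finset.sum_congr rfl fun x _ => G.card_mul_card_aut π hπ x.1 x.2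

/-- The normalised form of the comparison. -/
theorem card_connEndPair_eq (G : FinQuiver) {R F : Type} [CommRing R] [Finite R] [Field F]
    [Finite F] (π : R →+* F) (hπ : Function.Surjective π) [IsLocalHom π] :
    (Nat.card (G.ConnEndPair R) : ℚ) = KacCount G R * (Nat.card R : ℚ) ^ Fintype.card G.V *
      ((1 - (Nat.card F : ℚ)⁻¹) ^ Fintype.card G.V * (1 - (Nat.card F : ℚ)⁻¹)⁻¹) := by
  have hq : 1 < Nat.card F := Finite.one_lt_card
  have hq0 : (Nat.card F : ℚ) ≠ 0 := by positivity
  have hq1 : (Nat.card F : ℚ) - 1 ≠ 0 := by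
    have : (1 : ℚ) < Nat.card F := by exact_mod_cast hq
    linarith
  have h1 := congrArg (Nat.cast : ℕ → ℚ) (G.card_mul_KacCount_mul_card π hπ)
  have h2 := congrArg (Nat.cast : ℕ → ℚ) (card_mul_card_units π hπ)
  push_cast [Nat.cast_sub hq.le] at h1 h2
  have h3 : (1 - (Nat.card F : ℚ)⁻¹) = (Nat.card F - 1) / Nat.card F := by field_simp
  have h4 : (Nat.card Rˣ : ℚ) = (1 - (Nat.card F : ℚ)⁻¹) * Nat.card R := by
    rw [h3]; field_simp; linarith
  rw [h4, mul_pow] at h1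
  have h5 : 1 - (Nat.card F : ℚ)⁻¹ ≠ 0 := by rw [h3]; exact div_ne_zero hq1 hq0
  have h6 : (Nat.card F : ℚ) - 1 = (1 - (Nat.card F : ℚ)⁻¹) * Nat.card F := by
    rw [h3]; field_simp
  rw [h6] at h1
  rw [← mul_assoc, eq_mul_inv_iff_mul_eq₀ h5]
  refine mul_left_cancel₀ hq0 ?_
  linear_combination -h1

end FinQuiver

/-! ### Truncated polynomial rings -/

namespace TruncRing

variable (F : Type) [Field F] (α : ℕ)

/-- The coefficient of `t ^ (α - 1)`. -/
noncomputable def topCoeff (hα : 1 ≤ α) : TruncRing F α →+ F :=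
  QuotientAddGroup.lift _ (Polynomial.lcoeff F (α - 1)).toAddMonoidHom fun p hp => by
    obtain ⟨r, rfl⟩ := Ideal.mem_span_singleton'.1 hp
    change (r * Polynomial.X ^ α).coeff (α - 1) = 0
    rw [Polynomial.coeff_mul_X_pow', if_neg (by omega)]

theorem topCoeff_mk (hα : 1 ≤ α) (p : Polynomial F) :
    topCoeff F α hα (Ideal.Quotient.mk _ p) = p.coeff (α - 1) := rfl

theorem eq_zero_of_topCoeff_mul (hα : 1 ≤ α) (r : TruncRing F α)
    (h : ∀ s, topCoeff F α hα (r * s) = 0) : r = 0 := by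
  obtain ⟨p, rfl⟩ := Ideal.Quotient.mk_surjective r
  rw [Ideal.Quotient.eq_zero_iff_mem, Ideal.mem_span_singleton, Polynomial.X_pow_dvd_iff]
  intro d hd
  have := h (Ideal.Quotient.mk _ (Polynomial.X ^ (α - 1 - d)))
  rwa [← map_mul, topCoeff_mk, Polynomial.coeff_mul_X_pow', if_pos (by omega),
    show α - 1 - (α - 1 - d) = d by omega] at this

theorem exists_isPrimitive (hα : 1 ≤ α) [Finite F] :
    ∃ ψ : AddChar (TruncRing F α) ℂ, ψ.IsPrimitive := by
  let χ := AddChar.FiniteField.primitiveChar_to_Complex F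
  have hχ : χ.IsPrimitive := AddChar.FiniteField.primitiveChar_to_Complex_isPrimitive F
  refine ⟨χ.compAddMonoidHom (topCoeff F α hα), fun r hr hone => hr ?_⟩
  refine eq_zero_of_topCoeff_mul F α hα r fun s => ?_
  by_contra hc
  refine hχ hc ?_
  ext c
  have h1 : ∀ p : Polynomial F, topCoeff F α hα (Ideal.Quotient.mk _ (Polynomial.C c * p)) =
      c * topCoeff F α hα (Ideal.Quotient.mk _ p) := fun p => by
    rw [topCoeff_mk, topCoeff_mk, Polynomial.coeff_C_mul]
  have h2 : topCoeff F α hα (r * (Ideal.Quotient.mk _ (Polynomial.C c) * s)) =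
      topCoeff F α hα (r * s) * c := by
    obtain ⟨p, hp⟩ := Ideal.Quotient.mk_surjective (r * s)
    rw [mul_left_comm, ← hp, ← map_mul, h1, mul_comm]
  have h3 := DFunLike.congr_fun hone (Ideal.Quotient.mk _ (Polynomial.C c) * s)
  rw [AddChar.mulShift_apply, AddChar.compAddMonoidHom_apply, h2] at h3
  rw [AddChar.mulShift_apply, h3]
  rfl

/-- Reduction modulo `t`. -/
noncomputable def residue (hα : 1 ≤ α) : TruncRing F α →+* F :=
  Ideal.Quotient.lift _ Polynomial.constantCoeff fun p hp => by
    obtain ⟨r, rfl⟩ := Ideal.mem_span_singleton'.1 hp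
    simp [show 0 ≠ α by omega]

theorem residue_surjective (hα : 1 ≤ α) : Function.Surjective (residue F α hα) := fun c =>
  ⟨Ideal.Quotient.mk _ (Polynomial.C c), by simp [residue]⟩

theorem isLocalHom_residue (hα : 1 ≤ α) : IsLocalHom (residue F α hα) where
  map_nonunit r hr := by
    obtain ⟨p, rfl⟩ := Ideal.Quotient.mk_surjective r
    have hp : p.coeff 0 ≠ 0 := hr.ne_zero
    have hcop : IsCoprime p (Polynomial.X ^ α) := by
      refine IsCoprime.pow_right (IsCoprime.symm ?_)
      refine (Polynomial.irreducible_X.coprime_iff_not_dvd).2 fun h => hp ?_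
      exact Polynomial.X_dvd_iff.1 h
    obtain ⟨a, b, hab⟩ := hcop
    refine IsUnit.of_mul_eq_one (Ideal.Quotient.mk _ a) ?_
    rw [← map_mul, ← map_one (Ideal.Quotient.mk _), Ideal.Quotient.eq,
      Ideal.mem_span_singleton']
    exact ⟨-b, by linear_combination -hab⟩

theorem finite [Finite F] : Finite (TruncRing F α) := by
  have := (Polynomial.monic_X_pow (R := F) α).finite_quotient
  exact Module.finite_of_finite F

theorem card_eq [Fintype F] : Nat.card (TruncRing F α) = Fintype.card F ^ α := by
  have := (Polynomial.monic_X_pow (R := F) α).finite_quotient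
  rw [Module.natCard_eq_pow_finrank (K := F), finrank_quotient_span_eq_natDegree,
    Polynomial.natDegree_X_pow, Nat.card_eq_fintype_card]

end TruncRing

open Classical in
/-- the rank-`1̲` instance of the plethystic formula relating counts of
jets on quiver moment-map fibres to Kac polynomials with multiplicities.  Let `Q` be a
finite quiver, `α ≥ 1`, `q` a prime power and `R := 𝔽_q[t]/(t^α)`.  Then
`B_{(Q,α)}(q) = q^{α·#Q₁} · Σ_𝒫 (1 − q⁻¹)^{#Q₀ − #𝒫} · ∏_{I ∈ 𝒫} A_{(Q|_I,α),1̲}(q)`,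
the sum running over all partitions `𝒫` of `Q₀` into nonempty parts (encoded as finite
sets of pairwise disjoint nonempty subsets of `Q₀` covering `Q₀`). -/
theorem plethystic_formula_rank_one (G : FinQuiver) (α : ℕ) (hα : 1 ≤ α)
    (F : Type) [Field F] [Fintype F] :
    (BCount G (TruncRing F α) : ℚ)
      = (Fintype.card F : ℚ) ^ (α * Fintype.card G.E) *
        ∑ P ∈ Finset.univ.filter (fun P : Finset (Finset G.V) =>
            (∀ I ∈ P, I.Nonempty) ∧ (↑P : Set (Finset G.V)).PairwiseDisjoint id ∧
            P.biUnion id = Finset.univ),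
          (1 - (Fintype.card F : ℚ)⁻¹) ^ ((Fintype.card G.V : ℤ) - (P.card : ℤ)) *
            ∏ I ∈ P, (KacCount (G.restrictV (↑I : Set G.V)) (TruncRing F α) : ℚ) := by

  have := TruncRing.finite F α
  have := Fintype.ofFinite (TruncRing F α)
  have := TruncRing.isLocalHom_residue F α hα
  obtain ⟨ψ, hψ⟩ := TruncRing.exists_isPrimitive F α hα
  have hq : 1 < Fintype.card F := Fintype.one_lt_card
  have hc : 1 - (Fintype.card F : ℚ)⁻¹ ≠ 0 := by
    have : (Fintype.card F : ℚ)⁻¹ < 1 := inv_lt_one_of_one_lt₀ (by exact_mod_cast hq)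
    linarith
  have hR : (Fintype.card (TruncRing F α) : ℚ) = (Fintype.card F : ℚ) ^ α := by
    rw [← Nat.card_eq_fintype_card, TruncRing.card_eq]
    push_cast
    rfl
  have hdual := congrArg (Nat.cast : ℕ → ℚ) (G.card_pow_mul_BCount hψ)
  push_cast [G.endPairCount_eq_sum] at hdual
  rw [hR] at hdual
  have hR0 : ((Fintype.card F : ℚ) ^ α) ^ Fintype.card G.V ≠ 0 := by positivity
  refine mul_left_cancel₀ hR0 (hdual.trans ?_)
  rw [← pow_mul, mul_left_comm, Finset.mul_sum _ _ (_ ^ Fintype.card G.V)]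
  congr 1
  refine Finset.sum_congr rfl fun P hP => ?_
  have hP : G.IsPartition P := (Finset.mem_filter.1 hP).2
  have hcard : ∑ I ∈ P, I.card = Fintype.card G.V := by
    rw [← Finset.card_univ, ← hP.2.2, Finset.card_biUnion hP.2.1]
    rfl
  have hI : ∀ I : Finset G.V, Fintype.card (G.restrictV (↑I : Set G.V)).V = I.card := fun I => by
    rw [← Nat.card_eq_fintype_card]
    exact (Nat.card_eq_fintype_card (α := I)).trans (Fintype.card_coe I)
  simp_rw [FinQuiver.card_connEndPair_eq _ (TruncRing.residue F α hα)
    (TruncRing.residue_surjective F α hα), hI, Nat.card_eq_fintype_card, hR,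
    Finset.prod_mul_distrib, Finset.prod_pow_eq_pow_sum, hcard, Finset.prod_const]
  rw [zpow_sub₀ hc, zpow_natCast, zpow_natCast, inv_pow]
  ring
end

section
/- Let Q be a finite quiver with at least one arrow whose underlying multigraph is 2-connected, and let q be a prime power. For each proper nonempty subset E ⊊ Q₁ set d_E := b(Q) − b(Q|_E); each d_E ≥ 1, and b(Q) ≥ 1. Then the sequence α ↦ q^{−α·b(Q)} · A_{(Q,α),1̲}(q) converges as α → ∞, and its limit equals [ (1 − q^{−1})^{b(Q)} / (1 − q^{−b(Q)}) ] · Σ over all chains ∅ ⊊ E₁ ⊊ ⋯ ⊊ E_k ⊊ Q₁ of proper nonempty subsets of Q₁ (k ≥ 0, the empty chain contributing 1) of ∏_{j=1}^{k} q^{−d_{E_j}} / (1 − q^{−d_{E_j}}). -/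
/-- For a subset `E` of the edges, the exponent `d_E := b(Q) − b(Q|_E)`. -/
noncomputable def dExp (G : FinQuiver) (E : Finset G.E) : ℤ :=
  G.betti - (G.restrictE (↑E : Set G.E)).betti
/-- An affine contraction with convergent inhomogeneity converges to the limiting fixed point. -/
theorem tendsto_of_affine_recurrence {a c : ℕ → ℝ} {w l : ℝ} (hw0 : 0 ≤ w) (hw1 : w < 1)
    (ha : ∀ n, a (n + 1) = w * a n + c n) (hc : Filter.Tendsto c Filter.atTop (nhds l)) :
    Filter.Tendsto a Filter.atTop (nhds (l / (1 - w))) := by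
  have h1w : 0 < 1 - w := sub_pos.2 hw1
  rw [Metric.tendsto_atTop] at hc ⊢
  intro ε hε
  obtain ⟨N, hN⟩ := hc (ε / 2 * (1 - w)) (by positivity)
  have key : ∀ m, |a (N + m) - l / (1 - w)| ≤ w ^ m * |a N - l / (1 - w)| + ε / 2 := by
    intro m
    induction m with
    | zero => simp; positivity
    | succ m ih =>
      have h := (hN (N + m) (by omega)).le
      rw [Real.dist_eq] at h
      have e : a (N + (m + 1)) - l / (1 - w)
          = w * (a (N + m) - l / (1 - w)) + (c (N + m) - l) := by
        rw [← add_assoc, ha]; field_simp; ring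
      calc |a (N + (m + 1)) - l / (1 - w)|
          ≤ w * |a (N + m) - l / (1 - w)| + |c (N + m) - l| := by
            rw [e]
            refine (abs_add_le _ _).trans ?_
            rw [abs_mul, abs_of_nonneg hw0]
        _ ≤ w * (w ^ m * |a N - l / (1 - w)| + ε / 2) + ε / 2 * (1 - w) := by gcongr
        _ = w ^ (m + 1) * |a N - l / (1 - w)| + ε / 2 := by ring
  have ht : Filter.Tendsto (fun m : ℕ => w ^ m * |a N - l / (1 - w)|) Filter.atTop (nhds 0) := by
    simpa using (tendsto_pow_atTop_nhds_zero_of_lt_one hw0 hw1).mul_const |a N - l / (1 - w)|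
  obtain ⟨M, hM⟩ := Filter.eventually_atTop.1 (ht.eventually_lt_const (half_pos hε))
  refine ⟨N + M, fun n hn => ?_⟩
  obtain ⟨m, rfl⟩ := Nat.exists_eq_add_of_le (show N ≤ n by omega)
  rw [Real.dist_eq]
  linarith [key m, hM m (by omega)]

section ChainSums

variable {ι : Type*} [Fintype ι]

open Classical in
/-- The chains of proper subsets strictly containing `S`. -/
noncomputable def chainsAbove (S : Finset ι) : Finset (Finset (Finset ι)) :=
  Finset.univ.filter fun C => (∀ E ∈ C, S ⊂ E ∧ E ≠ Finset.univ) ∧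
    IsChain (· ⊆ ·) (↑C : Set (Finset ι))

theorem mem_chainsAbove {S : Finset ι} {C : Finset (Finset ι)} :
    C ∈ chainsAbove S ↔ (∀ E ∈ C, S ⊂ E ∧ E ≠ Finset.univ) ∧
      IsChain (· ⊆ ·) (↑C : Set (Finset ι)) := by
  simp [chainsAbove]

open Classical in
/-- Splitting off the least member of a chain. -/
theorem sum_chainsAbove (g : Finset ι → ℝ) (S : Finset ι) :
    ∑ C ∈ chainsAbove S, ∏ E ∈ C, g E
      = 1 + ∑ T ∈ Finset.univ.filter (fun T => S ⊂ T ∧ T ≠ Finset.univ),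
          g T * ∑ C ∈ chainsAbove T, ∏ E ∈ C, g E := by
  have h0 : (∅ : Finset (Finset ι)) ∈ chainsAbove S := by simp [mem_chainsAbove]
  rw [← Finset.add_sum_erase _ _ h0, Finset.prod_empty]
  congr 1
  simp_rw [Finset.mul_sum]
  rw [Finset.sum_sigma']
  symm
  have hnot : ∀ T : Finset ι, ∀ C ∈ chainsAbove T, T ∉ C := fun T C hC hT =>
    (mem_chainsAbove.1 hC).1 T hT |>.1.ne rfl
  refine Finset.sum_bij (fun p _ => insert p.1 p.2) ?_ ?_ ?_ ?_
  · rintro ⟨T, C⟩ h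
    simp only [Finset.mem_sigma, Finset.mem_filter, Finset.mem_univ, true_and] at h
    obtain ⟨⟨hT, hT'⟩, hC⟩ := h
    rw [mem_chainsAbove] at hC
    rw [Finset.mem_erase, mem_chainsAbove]
    refine ⟨Finset.insert_ne_empty _ _, ?_, ?_⟩
    · intro E hE
      rcases Finset.mem_insert.1 hE with rfl | hE
      · exact ⟨hT, hT'⟩
      · exact ⟨hT.trans (hC.1 E hE).1, (hC.1 E hE).2⟩
    · rw [Finset.coe_insert]
      exact hC.2.insert fun E hE _ => Or.inl (hC.1 E hE).1.subset
  · rintro ⟨T, C⟩ h ⟨T', C'⟩ h' heq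
    simp only [Finset.mem_sigma] at h h' heq
    have hT : T = T' := by
      by_contra hne
      have m1 : T ∈ insert T' C' := heq ▸ Finset.mem_insert_self _ _
      have m2 : T' ∈ insert T C := heq ▸ Finset.mem_insert_self _ _
      have s1 := ((mem_chainsAbove.1 h'.2).1 T ((Finset.mem_insert.1 m1).resolve_left hne)).1
      have s2 := ((mem_chainsAbove.1 h.2).1 T'
        ((Finset.mem_insert.1 m2).resolve_left (Ne.symm hne))).1
      exact (s1.trans s2).ne rfl
    subst hT
    have : C = C' := by
      rw [← Finset.erase_insert (hnot T C h.2), heq, Finset.erase_insert (hnot T C' h'.2)]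
    rw [this]
  · intro C hC
    rw [Finset.mem_erase, mem_chainsAbove] at hC
    obtain ⟨hne, hC, hch⟩ := hC
    obtain ⟨T, hT, hmin⟩ := C.exists_minimal (Finset.nonempty_iff_ne_empty.2 hne)
    refine ⟨⟨T, C.erase T⟩, ?_, Finset.insert_erase hT⟩
    simp only [Finset.mem_sigma, Finset.mem_filter, Finset.mem_univ, true_and]
    refine ⟨hC T hT, mem_chainsAbove.2 ⟨fun E hE => ⟨?_, (hC E (Finset.mem_of_mem_erase hE)).2⟩,
      hch.mono (Finset.coe_subset.2 (Finset.erase_subset _ _))⟩⟩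
    obtain ⟨hne', hE⟩ := Finset.mem_erase.1 hE
    rcases hch hT hE (Ne.symm hne') with h | h
    · exact h.ssubset_of_ne (Ne.symm hne')
    · exact (hmin hE h).ssubset_of_ne (Ne.symm hne')
  · rintro ⟨T, C⟩ h
    simp only [Finset.mem_sigma] at h
    rw [Finset.prod_insert (hnot T C h.2)]

open Classical in
/-- The transfer-matrix limit: iterating the weighted sum over supersets. -/
theorem tendsto_superset_recurrence {w : Finset ι → ℝ} (hw0 : ∀ S, 0 ≤ w S)
    (hw1 : ∀ S, S ≠ Finset.univ → w S < 1) (hwu : w Finset.univ = 1)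
    {U : ℕ → Finset ι → ℝ}
    (hU : ∀ n S, U (n + 1) S = ∑ T ∈ Finset.univ.filter (S ⊆ ·), w T * U n T)
    (S : Finset ι) (hS : S ≠ Finset.univ) :
    Filter.Tendsto (fun n => U n S) Filter.atTop
      (nhds (U 0 Finset.univ / (1 - w S) *
        ∑ C ∈ chainsAbove S, ∏ E ∈ C, w E / (1 - w E))) := by
  have huniv : ∀ n, U n Finset.univ = U 0 Finset.univ := by
    intro n
    induction n with
    | zero => rfl
    | succ n ih =>
      have : Finset.univ.filter ((Finset.univ : Finset ι) ⊆ ·) = {Finset.univ} := by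
        ext T; simp [Finset.univ_subset_iff]
      rw [hU, this, Finset.sum_singleton, hwu, one_mul, ih]
  induction S using WellFoundedGT.induction with
  | ind S ih => ?_
  have hsplit : Finset.univ.filter (S ⊆ ·) = insert S (insert Finset.univ
      (Finset.univ.filter fun T : Finset ι => S ⊂ T ∧ T ≠ Finset.univ)) := by
    ext T
    simp only [Finset.mem_filter, Finset.mem_univ, true_and, Finset.mem_insert]
    constructor
    · intro h
      by_cases h1 : T = S
      · exact Or.inl h1
      by_cases h2 : T = Finset.univ
      · exact Or.inr (Or.inl h2)
      exact Or.inr (Or.inr ⟨h.ssubset_of_ne (Ne.symm h1), h2⟩)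
    · rintro (rfl | rfl | h)
      · exact subset_rfl
      · exact Finset.subset_univ _
      · exact h.1.subset
  have hrec : ∀ n, U (n + 1) S = w S * U n S + (U 0 Finset.univ +
      ∑ T ∈ Finset.univ.filter (fun T => S ⊂ T ∧ T ≠ Finset.univ), w T * U n T) := by
    intro n
    rw [hU, hsplit, Finset.sum_insert, Finset.sum_insert, hwu, one_mul, huniv]
    · simp
    · simp [hS]
  have hsum := tendsto_finsetSum
    (Finset.univ.filter fun T : Finset ι => S ⊂ T ∧ T ≠ Finset.univ) fun T hT =>
      (ih T (Finset.mem_filter.1 hT).2.1 (Finset.mem_filter.1 hT).2.2).const_mul (w T)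
  have hlim := tendsto_of_affine_recurrence (a := fun n => U n S) (hw0 S) (hw1 S hS) hrec
    (tendsto_const_nhds.add hsum)
  convert hlim using 2
  rw [sum_chainsAbove, div_mul_eq_mul_div, mul_add, mul_one, Finset.mul_sum]
  congr 2
  refine Finset.sum_congr rfl fun T _ => ?_
  ring

open Classical in
/-- Sums over `z : ι → F` of a function of `S ∪ supp z`, grouped by the value of the union. -/
theorem sum_union_support {F : Type*} [Field F] [Fintype F] (S : Finset ι) (f : Finset ι → ℝ) :
    ∑ z : ι → F, f (S ∪ Finset.univ.filter (z · ≠ 0))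
      = ∑ T ∈ Finset.univ.filter (S ⊆ ·),
        (Fintype.card F : ℝ) ^ S.card * ((Fintype.card F : ℝ) - 1) ^ (T.card - S.card) * f T := by
  rw [← Finset.sum_fiberwise_of_maps_to (g := fun z : ι → F => S ∪ Finset.univ.filter (z · ≠ 0))
    (t := Finset.univ.filter (S ⊆ ·)) (by simp)]
  refine Finset.sum_congr rfl fun T hT => ?_
  have hST : S ⊆ T := (Finset.mem_filter.1 hT).2
  rw [Finset.sum_congr rfl (g := fun _ => f T) fun z hz => by rw [(Finset.mem_filter.1 hz).2],
    Finset.sum_const, nsmul_eq_mul]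
  congr 1
  have hset : Finset.univ.filter (fun z : ι → F => S ∪ Finset.univ.filter (z · ≠ 0) = T)
      = Fintype.piFinset fun a => if a ∈ S then Finset.univ else
          if a ∈ T then Finset.univ.erase 0 else {0} := by
    ext z
    simp only [Finset.mem_filter, Finset.mem_univ, true_and, Fintype.mem_piFinset,
      Finset.ext_iff (s₂ := T), Finset.mem_union]
    refine forall_congr' fun a => ?_
    have := @hST a
    by_cases h1 : a ∈ S
    · simp [h1, this h1]
    · by_cases h2 : a ∈ T <;> simp [h1, h2]
  rw [hset, Fintype.card_piFinset, Nat.cast_prod]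
  have hval : ∀ a, (((if a ∈ S then Finset.univ else
      if a ∈ T then Finset.univ.erase 0 else {0} : Finset F).card : ℕ) : ℝ)
      = (if a ∈ S then (Fintype.card F : ℝ) else 1)
        * (if a ∈ T \ S then (Fintype.card F : ℝ) - 1 else 1) := by
    intro a
    have := @hST a
    have hpos : 1 ≤ Fintype.card F := Fintype.card_pos
    by_cases h1 : a ∈ S
    · simp [h1]
    · by_cases h2 : a ∈ T <;> simp [h1, h2, Finset.card_erase_of_mem, Nat.cast_sub hpos]
  simp_rw [hval]
  rw [Finset.prod_mul_distrib, Finset.prod_ite_mem, Finset.prod_ite_mem, Finset.univ_inter,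
    Finset.univ_inter, Finset.prod_const, Finset.prod_const, Finset.card_sdiff_of_subset hST]

open Classical in
/-- The edges at which one of the first `j + 1` layers of `z` is nonzero. -/
noncomputable def cumSupport {F : Type*} [Field F] {n : ℕ} (z : Fin n → ι → F) (j : Fin n) :
    Finset ι :=
  Finset.univ.filter fun a => ∃ i ≤ j, z i a ≠ 0

open Classical in
/-- The edges at which some layer of `z` is nonzero. -/
noncomputable def totalSupport {F : Type*} [Field F] {n : ℕ} (z : Fin n → ι → F) : Finset ι :=
  Finset.univ.filter fun a => ∃ i, z i a ≠ 0

theorem mem_cumSupport {F : Type*} [Field F] {n : ℕ} {z : Fin n → ι → F} {j : Fin n} {a : ι} :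
    a ∈ cumSupport z j ↔ ∃ i ≤ j, z i a ≠ 0 := by
  simp [cumSupport]

theorem mem_totalSupport {F : Type*} [Field F] {n : ℕ} {z : Fin n → ι → F} {a : ι} :
    a ∈ totalSupport z ↔ ∃ i, z i a ≠ 0 := by
  simp [totalSupport]

open Classical in
/-- The sum over all layered functions `z` of the weights of the successive supports. -/
noncomputable def layerSum (F : Type*) [Field F] [Fintype F] (v h : Finset ι → ℝ) (n : ℕ)
    (S : Finset ι) : ℝ :=
  ∑ z : Fin n → ι → F, (∏ j, v (S ∪ cumSupport z j)) * h (S ∪ totalSupport z)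

open Classical in
theorem layerSum_succ (F : Type*) [Field F] [Fintype F] (v h : Finset ι → ℝ) (n : ℕ)
    (S : Finset ι) :
    layerSum F v h (n + 1) S = ∑ T ∈ Finset.univ.filter (S ⊆ ·),
      (Fintype.card F : ℝ) ^ S.card * ((Fintype.card F : ℝ) - 1) ^ (T.card - S.card)
        * (v T * layerSum F v h n T) := by
  rw [← sum_union_support (F := F) S fun T => v T * layerSum F v h n T, layerSum,
    ← (Fin.consEquiv fun _ : Fin (n + 1) => ι → F).sum_comp, Fintype.sum_prod_type]
  refine Finset.sum_congr rfl fun z₀ _ => ?_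
  rw [layerSum, Finset.mul_sum]
  refine Finset.sum_congr rfl fun z _ => ?_
  have e0 : cumSupport (Fin.cons z₀ z : Fin (n + 1) → ι → F) 0
      = Finset.univ.filter (z₀ · ≠ 0) := by
    ext a; simp [mem_cumSupport]
  have e1 : ∀ j : Fin n, S ∪ cumSupport (Fin.cons z₀ z : Fin (n + 1) → ι → F) j.succ
      = S ∪ Finset.univ.filter (z₀ · ≠ 0) ∪ cumSupport z j := by
    intro j
    ext a; simp [mem_cumSupport, Fin.exists_fin_succ]
  have e2 : S ∪ totalSupport (Fin.cons z₀ z : Fin (n + 1) → ι → F)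
      = S ∪ Finset.univ.filter (z₀ · ≠ 0) ∪ totalSupport z := by
    ext a; simp [mem_totalSupport, Fin.exists_fin_succ]
  change (∏ j, v (S ∪ cumSupport (Fin.cons z₀ z) j)) * h (S ∪ totalSupport (Fin.cons z₀ z)) = _
  rw [Fin.prod_univ_succ, e0, e2]
  simp_rw [e1]
  ring

open Classical in
/-- The limit of the normalized layer sums. -/
theorem tendsto_layerSum (F : Type*) [Field F] [Fintype F] {v h w : Finset ι → ℝ}
    (hw0 : ∀ S, 0 ≤ w S) (hw1 : ∀ S, S ≠ Finset.univ → w S < 1) (hwu : w Finset.univ = 1)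
    {κ : ℝ} (hκ : κ ≠ 0) (hv : ∀ S, (Fintype.card F : ℝ) ^ S.card * v S = κ * w S)
    (S : Finset ι) (hS : S ≠ Finset.univ) :
    Filter.Tendsto (fun n => κ⁻¹ ^ n * ((1 - (Fintype.card F : ℝ)⁻¹) ^ S.card *
        layerSum F v h n S)) Filter.atTop
      (nhds ((1 - (Fintype.card F : ℝ)⁻¹) ^ Fintype.card ι * h Finset.univ / (1 - w S) *
        ∑ C ∈ chainsAbove S, ∏ E ∈ C, w E / (1 - w E))) := by
  have hq : (Fintype.card F : ℝ) ≠ 0 := Nat.cast_ne_zero.2 Fintype.card_ne_zero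
  have key := tendsto_superset_recurrence hw0 hw1 hwu
    (U := fun n S => κ⁻¹ ^ n * ((1 - (Fintype.card F : ℝ)⁻¹) ^ S.card * layerSum F v h n S))
    (fun n S => by
      rw [layerSum_succ, Finset.mul_sum, Finset.mul_sum]
      refine Finset.sum_congr rfl fun T hT => ?_
      obtain ⟨m, hm⟩ := Nat.exists_eq_add_of_le
        (Finset.card_le_card (Finset.mem_filter.1 hT).2)
      have hvT : v T = κ * w T / (Fintype.card F : ℝ) ^ T.card := by
        rw [← hv]; field_simp
      rw [hvT, hm, Nat.add_sub_cancel_left, pow_succ κ⁻¹]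
      have : (Fintype.card F : ℝ) - 1
          = (1 - (Fintype.card F : ℝ)⁻¹) * (Fintype.card F : ℝ) := by field_simp
      rw [this]
      generalize 1 - (Fintype.card F : ℝ)⁻¹ = r
      field_simp
      ring) S hS
  have hl0 : layerSum F v h 0 Finset.univ = h Finset.univ := by
    simp [layerSum, Finset.union_eq_left.2 (Finset.subset_univ _)]
  simpa [hl0] using key

end ChainSums

namespace FinQuiver

/-- Functions on the vertices that agree at the ends of each edge are functions on the set of
connected components. -/
def locallyConstantEquiv (G : FinQuiver) (T : Type*) :
    {f : G.V → T // ∀ a, f (G.t a) = f (G.s a)} ≃ (G.adjGraph.ConnectedComponent → T) where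
  toFun f := SimpleGraph.ConnectedComponent.lift f.1 fun v w p _ => by
    induction p with
    | nil => rfl
    | cons h _ ih =>
      rw [← ih (by simp_all)]
      obtain ⟨-, ⟨e, rfl, rfl⟩ | ⟨e, rfl, rfl⟩⟩ := (SimpleGraph.fromRel_adj _ _ _).1 h
      · exact (f.2 e).symm
      · exact f.2 e
  invFun g := ⟨fun v => g (G.adjGraph.connectedComponentMk v), fun a => by
    by_cases h : G.s a = G.t a
    · rw [h]
    · refine congrArg g ?_
      refine (SimpleGraph.ConnectedComponent.sound (SimpleGraph.Adj.reachable ?_)).symm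
      exact (SimpleGraph.fromRel_adj _ _ _).2 ⟨h, Or.inl ⟨a, rfl, rfl⟩⟩⟩
  left_inv f := rfl
  right_inv g := by
    funext C
    induction C using SimpleGraph.ConnectedComponent.ind with
    | _ v => rfl

theorem card_locallyConstant (G : FinQuiver) (T : Type*) (S : Set G.E) :
    Nat.card {f : G.V → T // ∀ a ∈ S, f (G.t a) = f (G.s a)}
      = Nat.card T ^ (G.restrictE S).c := by
  have : Finite (G.restrictE S).adjGraph.ConnectedComponent :=
    Finite.of_surjective (G.restrictE S).adjGraph.connectedComponentMk Quot.mk_surjective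
  rw [c, ← Nat.card_fun, ← Nat.card_congr ((G.restrictE S).locallyConstantEquiv T)]
  refine Nat.card_congr (Equiv.subtypeEquivRight fun f => ?_)
  exact ⟨fun h a => h a.1 a.2, fun h a ha => h ⟨a, ha⟩⟩

theorem c_eq_one_of_connected {G : FinQuiver} (h : G.Connected) : G.c = 1 := by
  have := h.nonempty
  have := h.preconnected.subsingleton_connectedComponent
  have : Nonempty G.adjGraph.ConnectedComponent :=
    ⟨G.adjGraph.connectedComponentMk Classical.ofNonempty⟩
  exact Nat.card_unique

theorem restrictE_univ_adjGraph (G : FinQuiver) :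
    (G.restrictE Set.univ).adjGraph = G.adjGraph := by
  unfold adjGraph
  congr 1
  funext a b
  exact propext ⟨fun ⟨e, h⟩ => ⟨e.1, h⟩, fun ⟨e, h⟩ => ⟨⟨e, trivial⟩, h⟩⟩

theorem restrictE_univ_c (G : FinQuiver) : (G.restrictE Set.univ).c = G.c :=
  congrArg (fun H : SimpleGraph G.V => Nat.card H.ConnectedComponent) G.restrictE_univ_adjGraph

theorem restrictE_univ_connected {G : FinQuiver} (h : G.Connected) :
    (G.restrictE (↑(Finset.univ : Finset G.E) : Set G.E)).Connected := by
  rw [Finset.coe_univ]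
  exact (congrArg (fun H : SimpleGraph G.V => H.Connected) G.restrictE_univ_adjGraph).mpr h

theorem restrictE_compl_singleton_c (G : FinQuiver) (e : G.E) :
    (G.restrictE {e}ᶜ).c = (G.deleteEdge e).c := rfl

/-- Adding an edge merges at most two components. -/
theorem restrictE_c_le_insert (G : FinQuiver) (S : Set G.E) (e : G.E) :
    (G.restrictE S).c ≤ (G.restrictE (insert e S)).c + 1 := by
  classical
  let K (S : Set G.E) := {f : G.V → ZMod 2 // ∀ a ∈ S, f (G.t a) = f (G.s a)}
  let δ (f : K S) : ZMod 2 := f.1 (G.t e) - f.1 (G.s e)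
  let rep (y : ZMod 2) : K S :=
    if h : ∃ f, δ f = y then h.choose else ⟨0, fun _ _ => rfl⟩
  have hrep (f : K S) : δ (rep (δ f)) = δ f := by
    have h : ∃ g, δ g = δ f := ⟨f, rfl⟩
    simp only [rep, dif_pos h]
    exact h.choose_spec
  let φ (f : K S) : K (insert e S) × ZMod 2 :=
    (⟨f.1 - (rep (δ f)).1, by
      rintro a (rfl | ha)
      · have := hrep f
        simp only [δ] at this ⊢
        simp only [Pi.sub_apply]
        linear_combination -this
      · simp only [Pi.sub_apply, f.2 a ha, (rep (δ f)).2 a ha]⟩, δ f)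
  have hφ : Function.Injective φ := by
    intro f g h
    have h2 : δ f = δ g := congrArg Prod.snd h
    have h1 : f.1 - (rep (δ f)).1 = g.1 - (rep (δ g)).1 := congrArg (fun p => p.1.1) h
    rw [h2] at h1
    exact Subtype.ext (sub_left_injective h1)
  have := Nat.card_le_card_of_injective φ hφ
  rw [Nat.card_prod, card_locallyConstant, card_locallyConstant, ← pow_succ] at this
  exact (Nat.pow_le_pow_iff_right (by simp)).1 this

theorem restrictE_empty_c (G : FinQuiver) : (G.restrictE ∅).c = Fintype.card G.V := by
  have h := G.card_locallyConstant (ZMod 2) ∅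
  rw [Nat.card_congr (Equiv.subtypeUnivEquiv (by simp))] at h
  exact (Nat.pow_right_injective le_rfl (by simpa using h)).symm

theorem restrictE_betti (G : FinQuiver) (S : Finset G.E) :
    (G.restrictE (↑S : Set G.E)).betti
      = ((G.restrictE (↑S : Set G.E)).c : ℤ) - Fintype.card G.V + S.card := by
  have h : Fintype.card (G.restrictE (↑S : Set G.E)).E = S.card := by
    rw [← Nat.card_eq_fintype_card]
    exact Nat.card_eq_card_toFinset (S : Set G.E) |>.trans (by simp)
  rw [betti, h]
  rfl

open Classical in
theorem restrictE_betti_mono (G : FinQuiver) {S T : Finset G.E} (h : S ⊆ T) :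
    (G.restrictE (↑S : Set G.E)).betti ≤ (G.restrictE (↑T : Set G.E)).betti := by
  rw [← Finset.union_eq_right.2 h]
  generalize T = U
  induction U using Finset.induction_on with
  | empty => rw [Finset.union_empty]
  | insert e U _ ih =>
    rw [Finset.union_insert]
    by_cases he : e ∈ S ∪ U
    · rwa [Finset.insert_eq_of_mem he]
    · have := G.restrictE_c_le_insert (↑(S ∪ U)) e
      rw [← Finset.coe_insert] at this
      refine ih.trans ?_
      rw [restrictE_betti, restrictE_betti, Finset.card_insert_of_notMem he]
      push_cast
      linarith

end FinQuiver

theorem dExp_eq (G : FinQuiver) (S : Finset G.E) :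
    dExp G S = (G.c : ℤ) + Fintype.card G.E - (G.restrictE (↑S : Set G.E)).c - S.card := by
  rw [dExp, FinQuiver.restrictE_betti, FinQuiver.betti]
  ring

/-- Deleting a nonempty set of edges from a 2-connected multigraph lowers the Betti number. -/
theorem one_le_dExp {G : FinQuiver} (h2 : G.TwoConnected) {S : Finset G.E}
    (hS : S ≠ Finset.univ) : 1 ≤ dExp G S := by
  classical
  obtain ⟨e, he⟩ : ∃ e, e ∉ S := by simpa [Finset.eq_univ_iff_forall] using hS
  have hmono := G.restrictE_betti_mono (S := S) (T := Finset.univ.erase e) (fun a ha => by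
    simp; rintro rfl; exact he ha)
  have hc : (G.restrictE (↑(Finset.univ.erase e) : Set G.E)).c = 1 := by
    have : (↑(Finset.univ.erase e) : Set G.E) = {e}ᶜ := by ext; simp
    rw [this, G.restrictE_compl_singleton_c, FinQuiver.c_eq_one_of_connected (h2.2 e)]
  rw [G.restrictE_betti (Finset.univ.erase e), hc, Finset.card_erase_of_mem (Finset.mem_univ e),
    Finset.card_univ, Nat.cast_sub (Fintype.card_pos_iff.2 ⟨e⟩)] at hmono
  rw [dExp, FinQuiver.betti, FinQuiver.c_eq_one_of_connected h2.1]
  push_cast at hmono ⊢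
  linarith

theorem dExp_empty (G : FinQuiver) : dExp G ∅ = G.betti := by
  rw [dExp_eq, Finset.coe_empty, G.restrictE_empty_c, FinQuiver.betti, Finset.card_empty]
  ring

theorem dExp_univ (G : FinQuiver) : dExp G Finset.univ = 0 := by
  rw [dExp_eq, Finset.coe_univ, G.restrictE_univ_c, Finset.card_univ]
  ring

section Burnside

variable (G : FinQuiver) (R : Type) [CommRing R]

/-- The representations with connected support. -/
abbrev ConnRep : Type := {x : G.E → R // (G.restrictE {a | x a ≠ 0}).Connected}

variable {G R} in
theorem gauge_support (u : G.V → Rˣ) (x : G.E → R) :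
    {a | (u (G.t a) : R) * x a * ((u (G.s a))⁻¹ : Rˣ) ≠ 0} = {a | x a ≠ 0} := by
  ext a
  simp

/-- The gauge action on representations with connected support. -/
instance gaugeAction : MulAction (G.V → Rˣ) (ConnRep G R) where
  smul u x := ⟨fun a => (u (G.t a) : R) * x.1 a * ((u (G.s a))⁻¹ : Rˣ), by
    rw [gauge_support]; exact x.2⟩
  one_smul x := Subtype.ext <| funext fun a => by
    change ((1 : Rˣ) : R) * x.1 a * ((1 : Rˣ)⁻¹ : Rˣ) = x.1 a
    simp
  mul_smul u v x := Subtype.ext <| funext fun a => by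
    change ((u (G.t a) * v (G.t a) : Rˣ) : R) * x.1 a * ((u (G.s a) * v (G.s a))⁻¹ : Rˣ)
      = (u (G.t a) : R) * ((v (G.t a) : R) * x.1 a * ((v (G.s a))⁻¹ : Rˣ)) * ((u (G.s a))⁻¹ : Rˣ)
    rw [mul_inv]
    push_cast
    ring

variable {G R} in
theorem gauge_smul_eq_iff (u : G.V → Rˣ) (x : ConnRep G R) :
    u • x = x ↔ ∀ a, ((u (G.t a) : R) - u (G.s a)) * x.1 a = 0 := by
  rw [Subtype.ext_iff, funext_iff]
  refine forall_congr' fun a => ?_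
  change (u (G.t a) : R) * x.1 a * ((u (G.s a))⁻¹ : Rˣ) = x.1 a ↔ _
  rw [Units.mul_inv_eq_iff_eq_mul, sub_mul, sub_eq_zero, mul_comm (x.1 a)]

/-- Burnside's lemma for the gauge action. -/
theorem kacCount_mul_card [Finite R] [Fintype (ConnRep G R)] :
    KacCount G R * Nat.card (G.V → Rˣ)
      = ∑ x : ConnRep G R,
        Nat.card {u : G.V → Rˣ // ∀ a, ((u (G.t a) : R) - u (G.s a)) * x.1 a = 0} := by
  have hK : KacCount G R = Nat.card (MulAction.orbitRel.Quotient (G.V → Rˣ) (ConnRep G R)) := by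
    refine Nat.card_congr (Quot.congrRight fun x y => ?_)
    change _ ↔ x ∈ MulAction.orbit _ y
    rw [MulAction.mem_orbit_symm]
    refine exists_congr fun u => ?_
    rw [Subtype.ext_iff, funext_iff]
    exact forall_congr' fun a => eq_comm
  rw [hK, ← Nat.card_prod,
    ← Nat.card_congr (MulAction.sigmaFixedByEquivOrbitsProdGroup (G.V → Rˣ) (ConnRep G R)),
    ← Nat.card_sigma]
  refine Nat.card_congr
    { toFun := fun p => ⟨p.2.1, p.1, (gauge_smul_eq_iff _ _).1 p.2.2⟩
      invFun := fun p => ⟨p.2.1, p.1, (gauge_smul_eq_iff _ _).2 p.2.2⟩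
      left_inv := fun _ => rfl
      right_inv := fun _ => rfl }

end Burnside

section TruncRing

open Polynomial

variable {F : Type} [Field F] {α : ℕ}

/-- The coefficients of an element of `F[t]/(t^α)`. -/
noncomputable def truncCoeff (r : TruncRing F α) (i : Fin α) : F :=
  (Ideal.Quotient.mk_surjective r).choose.coeff i

theorem truncRing_mk_eq_zero_iff (p : F[X]) :
    (Ideal.Quotient.mk _ p : TruncRing F α) = 0 ↔ ∀ i < α, p.coeff i = 0 := by
  rw [Ideal.Quotient.eq_zero_iff_mem, Ideal.mem_span_singleton, X_pow_dvd_iff]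

theorem truncCoeff_mk (p : F[X]) (i : Fin α) :
    truncCoeff (Ideal.Quotient.mk _ p : TruncRing F α) i = p.coeff i := by
  have h := (Ideal.Quotient.mk_surjective (Ideal.Quotient.mk _ p : TruncRing F α)).choose_spec
  rw [← sub_eq_zero, ← map_sub, truncRing_mk_eq_zero_iff] at h
  have hi := h i i.2
  rwa [coeff_sub, sub_eq_zero] at hi

theorem truncCoeff_sub (r s : TruncRing F α) (i : Fin α) :
    truncCoeff (r - s) i = truncCoeff r i - truncCoeff s i := by
  obtain ⟨p, rfl⟩ := Ideal.Quotient.mk_surjective r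
  obtain ⟨p', rfl⟩ := Ideal.Quotient.mk_surjective s
  rw [← map_sub, truncCoeff_mk, truncCoeff_mk, truncCoeff_mk, coeff_sub]

theorem eq_zero_iff_truncCoeff (r : TruncRing F α) : r = 0 ↔ ∀ i, truncCoeff r i = 0 := by
  obtain ⟨p, rfl⟩ := Ideal.Quotient.mk_surjective r
  rw [truncRing_mk_eq_zero_iff]
  simp only [truncCoeff_mk]
  exact ⟨fun h i => h i i.2, fun h i hi => h ⟨i, hi⟩⟩

theorem truncCoeff_bijective : Function.Bijective (truncCoeff (F := F) (α := α)) := by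
  constructor
  · intro r s h
    rw [← sub_eq_zero, eq_zero_iff_truncCoeff]
    intro i
    rw [truncCoeff_sub, h, sub_self]
  · intro c
    refine ⟨Ideal.Quotient.mk _ (∑ i : Fin α, monomial i (c i)), funext fun i => ?_⟩
    rw [truncCoeff_mk, finsetSum_coeff]
    simp [coeff_monomial, Fin.val_inj]

theorem finite_truncRing [Finite F] : Finite (TruncRing F α) :=
  Finite.of_injective _ truncCoeff_bijective.1

/-- A product vanishes iff the orders of vanishing of the factors add up to at least `α`. -/
theorem mul_eq_zero_iff_truncCoeff (d x : TruncRing F α) :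
    d * x = 0 ↔ ∀ k : Fin α, (∃ i ≤ k.rev, truncCoeff x i ≠ 0) → truncCoeff d k = 0 := by
  obtain ⟨p, rfl⟩ := Ideal.Quotient.mk_surjective d
  obtain ⟨y, rfl⟩ := Ideal.Quotient.mk_surjective x
  rw [← map_mul, truncRing_mk_eq_zero_iff]
  simp only [truncCoeff_mk]
  constructor
  · rintro h k ⟨i, hi, hy⟩
    by_contra hp
    have hi' := natTrailingDegree_le_of_ne_zero hy
    have hk' := natTrailingDegree_le_of_ne_zero hp
    have := h (p.natTrailingDegree + y.natTrailingDegree) (by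
      rw [Fin.le_def, Fin.val_rev] at hi
      omega)
    rw [coeff_mul_natTrailingDegree_add_natTrailingDegree] at this
    rcases mul_eq_zero.1 this with h0 | h0
    · rw [trailingCoeff_eq_zero] at h0
      exact hp (by rw [h0, coeff_zero])
    · rw [trailingCoeff_eq_zero] at h0
      exact hy (by rw [h0, coeff_zero])
  · intro h m hm
    rw [coeff_mul]
    refine Finset.sum_eq_zero fun ⟨k, i⟩ hki => ?_
    rw [Finset.HasAntidiagonal.mem_antidiagonal] at hki
    simp only at hki ⊢
    by_cases hy : y.coeff i = 0
    · rw [hy, mul_zero]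
    · rw [h ⟨k, by omega⟩ ⟨⟨i, by omega⟩, by rw [Fin.le_def, Fin.val_rev]; simp; omega, hy⟩,
        zero_mul]

theorem isUnit_iff_truncCoeff [Finite F] {n : ℕ} (r : TruncRing F (n + 1)) :
    IsUnit r ↔ truncCoeff r 0 ≠ 0 := by
  have := finite_truncRing (F := F) (α := n + 1)
  constructor
  · rintro ⟨u, rfl⟩ h
    obtain ⟨p, hp⟩ := Ideal.Quotient.mk_surjective (u : TruncRing F (n + 1))
    obtain ⟨p', hp'⟩ := Ideal.Quotient.mk_surjective ((u⁻¹ : (TruncRing F (n + 1))ˣ) :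
      TruncRing F (n + 1))
    have h1 : (Ideal.Quotient.mk _ (p * p') : TruncRing F (n + 1)) = Ideal.Quotient.mk _ 1 := by
      rw [map_mul, hp, hp', Units.mul_inv, map_one]
    have h2 := congrArg (fun r => truncCoeff r 0) h1
    rw [← hp, truncCoeff_mk] at h
    simp only [truncCoeff_mk] at h2
    simp only [Fin.val_zero, mul_coeff_zero, coeff_one_zero] at h2 h
    simp [h] at h2
  · intro h
    rw [isUnit_iff_mem_nonZeroDivisors_of_finite, mem_nonZeroDivisors_iff_right]
    intro d hd
    rw [mul_eq_zero_iff_truncCoeff] at hd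
    exact (eq_zero_iff_truncCoeff d).2 fun k => hd k ⟨0, Fin.zero_le _, h⟩

end TruncRing

section Counting

variable (G : FinQuiver) (F : Type) [Field F] (n : ℕ)

/-- The layers of coefficients of a tuple over `F[t]/(t^(n+1))`. -/
noncomputable def layers : (G.E → TruncRing F (n + 1)) ≃ (Fin (n + 1) → G.E → F) :=
  (Equiv.piCongrRight fun _ => Equiv.ofBijective _ truncCoeff_bijective).trans
    (Equiv.piComm fun _ _ => F)

variable {G F n}

theorem layers_apply (x : G.E → TruncRing F (n + 1)) (i : Fin (n + 1)) (a : G.E) :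
    layers G F n x i a = truncCoeff (x a) i := rfl

theorem coe_totalSupport_layers (x : G.E → TruncRing F (n + 1)) :
    (↑(totalSupport (layers G F n x)) : Set G.E) = {a | x a ≠ 0} := by
  ext a
  simp [mem_totalSupport, layers_apply, eq_zero_iff_truncCoeff]

theorem cumSupport_last (z : Fin (n + 1) → G.E → F) :
    cumSupport z (Fin.last n) = totalSupport z := by
  ext a
  simp [mem_cumSupport, mem_totalSupport, Fin.le_last]

variable [Fintype F]

theorem card_ne_zero_real :
    (Nat.card {y : F // y ≠ 0} : ℝ) = Fintype.card F * (1 - (Fintype.card F : ℝ)⁻¹) := by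
  classical
  have hpos : 1 ≤ Fintype.card F := Fintype.card_pos
  have hq : (Fintype.card F : ℝ) ≠ 0 := Nat.cast_ne_zero.2 Fintype.card_ne_zero
  rw [Nat.card_eq_fintype_card, Fintype.card_subtype_compl, Fintype.card_subtype_eq,
    Nat.cast_sub hpos]
  field_simp
  simp

/-- The condition on the `k`-th layer of coefficients of an element of the stabilizer. -/
def IsStabilizerLayer (z : Fin (n + 1) → G.E → F) (k : Fin (n + 1)) (f : G.V → F) : Prop :=
  (k = 0 → ∀ v, f v ≠ 0) ∧ ∀ a ∈ cumSupport z k.rev, f (G.t a) = f (G.s a)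

theorem card_isStabilizerLayer (z : Fin (n + 1) → G.E → F) (k : Fin (n + 1)) :
    (Nat.card {f : G.V → F // IsStabilizerLayer z k f} : ℝ)
      = (Fintype.card F : ℝ) ^ (G.restrictE (↑(cumSupport z k.rev) : Set G.E)).c *
        if k = 0 then
          (1 - (Fintype.card F : ℝ)⁻¹) ^ (G.restrictE (↑(totalSupport z) : Set G.E)).c
        else 1 := by
  by_cases hk : k = 0
  · subst hk
    have e : {f : G.V → F // IsStabilizerLayer z 0 f} ≃
        {f : G.V → {y : F // y ≠ 0} //
          ∀ a ∈ (↑(cumSupport z (Fin.rev 0)) : Set G.E), f (G.t a) = f (G.s a)} :=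
      { toFun := fun f => ⟨fun v => ⟨f.1 v, f.2.1 rfl v⟩, fun a ha => Subtype.ext (f.2.2 a ha)⟩
        invFun := fun f => ⟨fun v => (f.1 v).1, fun _ v => (f.1 v).2,
          fun a ha => congrArg Subtype.val (f.2 a ha)⟩
        left_inv := fun _ => rfl
        right_inv := fun _ => rfl }
    rw [Nat.card_congr e, G.card_locallyConstant, Nat.cast_pow, card_ne_zero_real, mul_pow,
      if_pos rfl, Fin.rev_zero, cumSupport_last]
  · rw [if_neg hk, mul_one, ← Nat.card_eq_fintype_card, ← Nat.cast_pow, ← G.card_locallyConstant]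
    congr 1
    exact Nat.card_congr (Equiv.subtypeEquivRight fun f => by simp [IsStabilizerLayer, hk])

/-- The order of the stabilizer of a representation. -/
theorem card_stabilizer (x : G.E → TruncRing F (n + 1)) :
    (Nat.card {u : G.V → (TruncRing F (n + 1))ˣ //
        ∀ a, ((u (G.t a) : TruncRing F (n + 1)) - u (G.s a)) * x a = 0} : ℝ)
      = (∏ j, (Fintype.card F : ℝ) ^
          (G.restrictE (↑(cumSupport (layers G F n x) j) : Set G.E)).c) *
        (1 - (Fintype.card F : ℝ)⁻¹) ^
          (G.restrictE (↑(totalSupport (layers G F n x)) : Set G.E)).c := by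
  have hstab : ∀ d : G.V → TruncRing F (n + 1),
      (∀ a, (d (G.t a) - d (G.s a)) * x a = 0) ↔ ∀ k, ∀ a ∈ cumSupport (layers G F n x) k.rev,
        truncCoeff (d (G.t a)) k = truncCoeff (d (G.s a)) k := by
    intro d
    simp only [mul_eq_zero_iff_truncCoeff, truncCoeff_sub, sub_eq_zero, mem_cumSupport,
      layers_apply]
    exact forall_comm
  let φ (u : {u : G.V → (TruncRing F (n + 1))ˣ //
        ∀ a, ((u (G.t a) : TruncRing F (n + 1)) - u (G.s a)) * x a = 0}) (k : Fin (n + 1)) :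
      {f : G.V → F // IsStabilizerLayer (layers G F n x) k f} :=
    ⟨fun v => truncCoeff (u.1 v : TruncRing F (n + 1)) k, by
      refine ⟨?_, (hstab fun v => u.1 v).1 u.2 k⟩
      rintro rfl v
      exact (isUnit_iff_truncCoeff _).1 (u.1 v).isUnit⟩
  have hφ : Function.Bijective φ := by
    constructor
    · intro u u' h
      refine Subtype.ext (funext fun v => Units.ext (truncCoeff_bijective.1 (funext fun k => ?_)))
      exact congrFun (congrArg Subtype.val (congrFun h k)) v
    · intro f
      choose d hd using fun v => truncCoeff_bijective.2 fun k => (f k).1 v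
      have hu : ∀ v, IsUnit (d v) := fun v => by
        rw [isUnit_iff_truncCoeff, hd]
        exact (f 0).2.1 rfl v
      choose u hu using hu
      refine ⟨⟨u, ?_⟩, ?_⟩
      · simp only [hu]
        refine (hstab d).2 fun k a ha => ?_
        rw [hd, hd]
        exact (f k).2.2 a ha
      · refine funext fun k => Subtype.ext (funext fun v => ?_)
        simp only [φ, hu, hd]
  rw [Nat.card_eq_of_bijective φ hφ, Nat.card_pi, Nat.cast_prod]
  simp_rw [card_isStabilizerLayer]
  rw [Finset.prod_mul_distrib, Finset.prod_ite_eq' Finset.univ 0, if_pos (Finset.mem_univ _)]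
  congr 1
  exact Equiv.prod_comp Fin.revPerm fun j => (Fintype.card F : ℝ) ^
    (G.restrictE (↑(cumSupport (layers G F n x) j) : Set G.E)).c

theorem card_gaugeGroup :
    (Nat.card (G.V → (TruncRing F (n + 1))ˣ) : ℝ)
      = ((Fintype.card F : ℝ) ^ Fintype.card G.V) ^ (n + 1) *
        (1 - (Fintype.card F : ℝ)⁻¹) ^ Fintype.card G.V := by
  have h := card_stabilizer (G := G) (F := F) (n := n) 0
  have ht : totalSupport (layers G F n 0) = ∅ := by
    rw [← Finset.coe_eq_empty, coe_totalSupport_layers]; simp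
  have hc : ∀ j, cumSupport (layers G F n 0) j = ∅ := fun j => by
    rw [← Finset.subset_empty, ← ht]
    intro a
    rw [mem_cumSupport, mem_totalSupport]
    exact fun ⟨i, _, h⟩ => ⟨i, h⟩
  simp only [ht, hc, Finset.coe_empty, G.restrictE_empty_c] at h
  rw [Nat.card_congr (Equiv.subtypeUnivEquiv (by simp))] at h
  simpa using h

open Classical in
/-- The orbit count as a layer sum. -/
theorem kacCount_mul_card_eq_layerSum :
    (KacCount G (TruncRing F (n + 1)) : ℝ) * Nat.card (G.V → (TruncRing F (n + 1))ˣ)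
      = layerSum F (fun S : Finset G.E => (Fintype.card F : ℝ) ^ (G.restrictE (↑S : Set G.E)).c)
        (fun S => if (G.restrictE (↑S : Set G.E)).Connected then
          (1 - (Fintype.card F : ℝ)⁻¹) ^ (G.restrictE (↑S : Set G.E)).c else 0) (n + 1) ∅ := by
  have := finite_truncRing (F := F) (α := n + 1)
  have := Fintype.ofFinite (TruncRing F (n + 1))
  rw [← Nat.cast_mul, kacCount_mul_card, Nat.cast_sum, layerSum, ← (layers G F n).sum_comp]
  simp_rw [card_stabilizer, Finset.empty_union, coe_totalSupport_layers]
  simp_rw [mul_ite, mul_zero]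
  rw [← Finset.sum_filter]
  symm
  refine Finset.sum_subtype (p := fun x : G.E → TruncRing F (n + 1) =>
    (G.restrictE {a | x a ≠ 0}).Connected) _ (fun x => ?_) _
  exact Finset.mem_filter.trans (and_iff_right (Finset.mem_univ x))

end Counting

open Classical in
/-- Let `Q` be a finite quiver with at least one arrow whose underlying
multigraph is 2-connected, and `q` a prime power.  For each proper nonempty `E ⊊ Q₁` set
`d_E := b(Q) − b(Q|_E)`; each `d_E ≥ 1`, and `b(Q) ≥ 1`.  Then the sequence
`α ↦ q^{−α·b(Q)} · A_{(Q,α),1̲}(q)` converges as `α → ∞`, and its limit equals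
`[(1 − q⁻¹)^{b(Q)}/(1 − q^{−b(Q)})] · Σ_chains ∏_j q^{−d_{E_j}}/(1 − q^{−d_{E_j}})`,
the sum running over all chains `∅ ⊊ E₁ ⊊ ⋯ ⊊ E_k ⊊ Q₁` of proper nonempty subsets of
`Q₁` (`k ≥ 0`, the empty chain contributing `1`; a chain is encoded by its underlying
finite set of subsets). -/
theorem kac_limit_formula (G : FinQuiver) (hE : Nonempty G.E) (h2 : G.TwoConnected)
    (F : Type) [Field F] [Fintype F] :
    (∀ E : Finset G.E, E.Nonempty → E ≠ Finset.univ → 1 ≤ dExp G E) ∧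
    1 ≤ G.betti ∧
    Filter.Tendsto (fun α : ℕ =>
        (Fintype.card F : ℝ) ^ (-(α : ℤ) * G.betti) * (KacCount G (TruncRing F α) : ℝ))
      Filter.atTop
      (nhds ((1 - (Fintype.card F : ℝ)⁻¹) ^ G.betti
          / (1 - (Fintype.card F : ℝ) ^ (-G.betti)) *
        ∑ C ∈ Finset.univ.filter (fun C : Finset (Finset G.E) =>
            (∀ E ∈ C, E.Nonempty ∧ E ≠ Finset.univ) ∧
            IsChain (· ⊆ ·) (↑C : Set (Finset G.E))),
          ∏ E ∈ C, (Fintype.card F : ℝ) ^ (-(dExp G E))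
            / (1 - (Fintype.card F : ℝ) ^ (-(dExp G E))))) := by
  have hd : ∀ S : Finset G.E, S ≠ Finset.univ → 1 ≤ dExp G S := fun S => one_le_dExp h2
  have hne : (∅ : Finset G.E) ≠ Finset.univ := Finset.univ_nonempty.ne_empty.symm
  refine ⟨fun E _ hE => hd E hE, dExp_empty G ▸ hd ∅ hne, ?_⟩
  have hq1 : 1 < (Fintype.card F : ℝ) := Nat.one_lt_cast.2 Fintype.one_lt_card
  have hq0 : (Fintype.card F : ℝ) ≠ 0 := by positivity
  have hr : 1 - (Fintype.card F : ℝ)⁻¹ ≠ 0 := (sub_pos.2 (inv_lt_one_of_one_lt₀ hq1)).ne'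
  have hconn : (G.restrictE (↑(Finset.univ : Finset G.E) : Set G.E)).c = 1 := by
    rw [Finset.coe_univ, G.restrictE_univ_c, FinQuiver.c_eq_one_of_connected h2.1]
  have hlim := tendsto_layerSum F
    (v := fun S : Finset G.E => (Fintype.card F : ℝ) ^ (G.restrictE (↑S : Set G.E)).c)
    (h := fun S => if (G.restrictE (↑S : Set G.E)).Connected then
          (1 - (Fintype.card F : ℝ)⁻¹) ^ (G.restrictE (↑S : Set G.E)).c else 0)
    (w := fun S => (Fintype.card F : ℝ) ^ (-dExp G S))
    (κ := (Fintype.card F : ℝ) ^ (G.c + Fintype.card G.E))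
    (fun S => by positivity)
    (fun S hS => zpow_lt_one_of_neg₀ hq1 (by linarith [hd S hS]))
    (by simp [dExp_univ]) (by positivity)
    (fun S => by
      rw [dExp_eq, ← zpow_natCast, ← zpow_natCast, ← zpow_natCast, ← zpow_add₀ hq0,
        ← zpow_add₀ hq0]
      congr 1
      push_cast
      ring) ∅ hne
  have hb : G.betti = 1 - Fintype.card G.V + Fintype.card G.E := by
    rw [FinQuiver.betti, FinQuiver.c_eq_one_of_connected h2.1, Nat.cast_one]
  have hu : (G.restrictE (↑(Finset.univ : Finset G.E) : Set G.E)).Connected :=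
    FinQuiver.restrictE_univ_connected h2.1
  have hchains : Finset.univ.filter (fun C : Finset (Finset G.E) =>
      (∀ E ∈ C, E.Nonempty ∧ E ≠ Finset.univ) ∧ IsChain (· ⊆ ·) (↑C : Set (Finset G.E)))
      = chainsAbove ∅ := by
    ext C
    simp [mem_chainsAbove, Finset.empty_ssubset]
  rw [hchains, ← Filter.tendsto_add_atTop_iff_nat 1]
  have hlim' := ((Filter.tendsto_add_atTop_iff_nat 1).2 hlim).mul_const
    ((1 - (Fintype.card F : ℝ)⁻¹) ^ Fintype.card G.V)⁻¹
  rw [if_pos hu, hconn, dExp_empty] at hlim'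
  convert hlim' using 2 with n
  · rw [← kacCount_mul_card_eq_layerSum, card_gaugeGroup, Finset.card_empty, pow_zero, one_mul, hb,
      FinQuiver.c_eq_one_of_connected h2.1, ← pow_mul]
    have : (Fintype.card F : ℝ) ^ (-((n + 1 : ℕ) : ℤ) * (1 - Fintype.card G.V + Fintype.card G.E))
        = ((Fintype.card F : ℝ) ^ (1 + Fintype.card G.E))⁻¹ ^ (n + 1)
          * (Fintype.card F : ℝ) ^ (Fintype.card G.V * (n + 1)) := by
      rw [← inv_pow, ← pow_mul, inv_pow, ← zpow_natCast, ← zpow_natCast, ← zpow_neg,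
        ← zpow_add₀ hq0]
      congr 1
      push_cast
      ring
    rw [this]
    generalize 1 - (Fintype.card F : ℝ)⁻¹ = r at hr
    field_simp
  · have : (1 - (Fintype.card F : ℝ)⁻¹) ^ G.betti = (1 - (Fintype.card F : ℝ)⁻¹) ^ Fintype.card G.E
        * (1 - (Fintype.card F : ℝ)⁻¹) ^ 1
        * ((1 - (Fintype.card F : ℝ)⁻¹) ^ Fintype.card G.V)⁻¹ := by
      rw [hb, ← zpow_natCast, ← zpow_natCast, ← zpow_natCast, ← zpow_neg, ← zpow_add₀ hr,
        ← zpow_add₀ hr]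
      congr 1
      push_cast
      ring
    rw [this]
    ring
end
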